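/- Given t₂,…,t_{d+1} ∈ ℂ with |t₂| < 1/2, there exists δ > 0 such that for all t₀, t₁ with 0 < t₀ < δ and |t₁|² < t₀(1/2 − |t₂|), there is a unique positively oriented polynomial curve of degree ≤ d encircling the origin with enclosed area π t₀ and exterior harmonic moments t₁,…,t_{d+1} (and all higher moments zero). -/

import Mathlib

open Complex

/-- The parametrization `w ↦ rw + Σ_{j=0}^d a_j w^{-j}` of a polynomial curve of degree `≤ d`. -/
noncomputable def polyParam (d : ℕ) (r : ℝ) (a : Fin (d + 1) → ℂ) : ℂ → ℂ :=
  fun w => (r : ℂ) * w + ∑ j : Fin (d + 1), a j * w ^ (-(j : ℤ))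

/-- The `k`-th exterior harmonic moment `(1/(2πik)) ∮_γ z̄ z^{-k} dz` of the curve
parametrized by `f` on the unit circle. -/
noncomputable def extMoment (f : ℂ → ℂ) (k : ℕ) : ℂ :=
  (2 * Real.pi * I * k)⁻¹ *
    ∮ w in C(0, 1), (starRingEnd ℂ) (f w) * (f w) ^ (-(k : ℤ)) * deriv f w

/-- The enclosed area `(1/(2i)) ∮_γ z̄ dz` of the curve parametrized by `f`. -/
noncomputable def encArea (f : ℂ → ℂ) : ℂ :=
  (2 * I)⁻¹ * ∮ w in C(0, 1), (starRingEnd ℂ) (f w) * deriv f w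

/-!
On the unit circle the conjugate of `h = polyParam d r a` is the Laurent polynomial
`∑ conj (a j) * w ^ j + r * w⁻¹`, the Schwarz function `S` of the curve read in the parameter `w`.
The moments say that `S - P ∘ h` vanishes at infinity, where `P = t₁ + 2 t₂ z + ⋯` collects the
moments. Equating coefficients, this is the system `conj (a j) = [w ^ j] (P ∘ h)`, and the area
condition expresses `r` through the `a j`. With `t₀ = ε ^ 2`, on the scale `ε` the polynomial `P` is
nearly affine with slope `s = 2 t₂`, `‖s‖ < 1`, so in the norm in which the area is a quadratic form
the system is a fixed point problem for a contraction of a ball of radius `O(ε)`.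

Uniqueness needs an a priori bound: the coefficients of any solution lie in that ball. Now
`S - P ∘ h` is the Cauchy transform of the enclosed domain, hence at most `3 ε`. So the points
of the curve satisfy `‖conj z - P z‖ ≤ 3 ε`, which forces them to be either of size `O(ε)` or far
away; by connectedness all are of size `O(ε)`, since the area prevents the curve from surrounding
a disc of radius larger than `ε`.

Conversely, the fixed point is a small perturbation of the ellipse `r * (w + conj s * w⁻¹) + a 0`,
so `h` is univalent on the exterior of the unit disc, and it omits the origin there because
`‖t₁‖ ^ 2 < t₀ * (1 / 2 - ‖t₂‖)`.
-/

section

open Filter Topology Metric Set MeasureTheory Real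

namespace PolynomialCurve

/-! ### Circle averages of functions holomorphic near infinity -/

theorem ne_zero_of_one_le_norm {w : ℂ} (hw : 1 ≤ ‖w‖) : w ≠ 0 :=
  norm_pos_iff.1 (one_pos.trans_le hw)

theorem circleAverage_congr_unitSphere {f g : ℂ → ℂ} (h : ∀ w ∈ sphere (0 : ℂ) 1, f w = g w) :
    circleAverage f 0 1 = circleAverage g 0 1 :=
  circleAverage_congr_sphere (by rwa [abs_one])

theorem circleAverage_eq_of_tendsto_cobounded {f : ℂ → ℂ} {L : ℂ}
    (hf : ∀ w : ℂ, 1 ≤ ‖w‖ → DifferentiableAt ℂ f w)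
    (hL : Tendsto f (Bornology.cobounded ℂ) (𝓝 L)) : circleAverage f 0 1 = L := by
  set g : ℂ → ℂ := Function.update (fun w => f w⁻¹) 0 L with hg
  have hg_ne : ∀ w ≠ 0, g =ᶠ[𝓝 w] fun w => f w⁻¹ := fun w hw =>
    (eventually_ne_nhds hw).mono fun u hu => Function.update_of_ne hu _ _
  have hg_diff : ∀ w : ℂ, ‖w‖ ≤ 1 → w ≠ 0 → DifferentiableAt ℂ g w := fun w hw hw0 =>
    ((hf w⁻¹ (by rw [norm_inv]; exact (one_le_inv₀ (norm_pos_iff.2 hw0)).2 hw)).comp w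
      (differentiableAt_inv hw0)).congr_of_eventuallyEq (hg_ne w hw0)
  have hg_zero : ContinuousAt g 0 :=
    continuousAt_update_same.2 (hL.comp tendsto_inv₀_nhdsNE_zero)
  have hmean : circleAverage g 0 1 = g 0 := by
    refine circleAverage_of_differentiable_on_off_countable (countable_singleton 0) ?_ ?_
    · intro w hw
      rcases eq_or_ne w 0 with rfl | hw0
      · exact hg_zero.continuousWithinAt
      · exact (hg_diff w (by simpa using hw) hw0).continuousAt.continuousWithinAt
    · intro w hw
      have hw1 : ‖w‖ < 1 := by simpa using hw.1
      exact hg_diff w hw1.le hw.2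
  rw [← circleAverage_zero_one_congr_inv]
  calc circleAverage (fun w => f w⁻¹) 0 1 = circleAverage g 0 1 := by
        refine circleAverage_congr_sphere fun w hw => ?_
        have hw1 : ‖w‖ = 1 := by simpa using hw
        exact ((hg_ne w (ne_zero_of_one_le_norm hw1.ge)).self_of_nhds).symm
    _ = L := by rw [hmean, hg, Function.update_self]

theorem circleAverage_mul_div_sub_eq_zero {w : ℂ} (hw : 1 < ‖w‖) :
    circleAverage (fun u => u / (w - u)) 0 1 = 0 := by
  have hne : ∀ u ∈ closedBall (0 : ℂ) 1, w - u ≠ 0 := by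
    rintro u hu h
    rw [sub_eq_zero] at h
    rw [mem_closedBall_zero_iff, ← h] at hu
    exact hw.not_ge hu
  have hdiff : DifferentiableOn ℂ (fun u => u / (w - u)) (closedBall 0 1) := fun u hu =>
    (differentiableAt_id.div (differentiableAt_id.const_sub w) (hne u hu)).differentiableWithinAt
  have := (hdiff.diffContOnCl_ball subset_rfl).mono (ball_subset_ball (abs_one (α := ℝ)).le)
  simpa using this.circleAverage

theorem tendsto_div_sub_cobounded (w : ℂ) :
    Tendsto (fun u : ℂ => u / (w - u)) (Bornology.cobounded ℂ) (𝓝 (-1)) := by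
  have : Tendsto (fun u : ℂ => (w * u⁻¹ - 1)⁻¹) (Bornology.cobounded ℂ) (𝓝 ((w * 0 - 1)⁻¹)) :=
    ((tendsto_inv₀_cobounded.const_mul w).sub_const 1).inv₀ (by simp)
  rw [show (w * 0 - 1)⁻¹ = (-1 : ℂ) by norm_num] at this
  refine this.congr' ?_
  filter_upwards [Bornology.eventually_ne_cobounded 0] with u hu
  rw [show w * u⁻¹ - 1 = (w - u) / u by field_simp, inv_div]

theorem differentiableAt_dslope_of_exterior {G : ℂ → ℂ} {w u : ℂ}
    (hG : ∀ u : ℂ, 1 ≤ ‖u‖ → DifferentiableAt ℂ G u) (hw : 1 < ‖w‖) (hu : 1 ≤ ‖u‖) :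
    DifferentiableAt ℂ (dslope G w) u := by
  rcases eq_or_ne u w with rfl | huw
  · have hopen : {v : ℂ | 1 < ‖v‖} ∈ 𝓝 u := (isOpen_lt continuous_const continuous_norm).mem_nhds hw
    exact ((differentiableOn_dslope hopen).2 fun v hv =>
      (hG v (le_of_lt hv)).differentiableWithinAt).differentiableAt hopen
  · exact (differentiableAt_dslope_of_ne huw).2 (hG u hu)

/-- The Cauchy formula for the exterior of the unit disc. -/
theorem circleAverage_mul_div_sub {G : ℂ → ℂ} {L w : ℂ}
    (hG : ∀ u : ℂ, 1 ≤ ‖u‖ → DifferentiableAt ℂ G u)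
    (hL : Tendsto G (Bornology.cobounded ℂ) (𝓝 L)) (hw : 1 < ‖w‖) :
    circleAverage (fun u => u * G u / (w - u)) 0 1 = G w - L := by
  have hne : ∀ u : ℂ, ‖u‖ = 1 → w - u ≠ 0 := by
    rintro u hu h
    rw [sub_eq_zero] at h
    rw [h, hu] at hw
    exact lt_irrefl _ hw
  have hdslope := fun u => differentiableAt_dslope_of_exterior (u := u) hG hw
  have hslope : ∀ᶠ u in Bornology.cobounded ℂ,
      u / (w - u) * (G u - G w) = -(u * dslope G w u) := by
    filter_upwards [Bornology.eventually_ne_cobounded w] with u hu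
    rw [dslope_of_ne _ hu, slope_def_field, ← neg_sub u w]
    have := sub_ne_zero.2 hu
    field_simp
  have hmean : circleAverage (fun u => -(u * dslope G w u)) 0 1 = G w - L := by
    refine circleAverage_eq_of_tendsto_cobounded
      (fun u hu => (differentiableAt_id.mul (hdslope u hu)).neg) ?_
    simpa using ((tendsto_div_sub_cobounded w).mul (hL.sub_const (G w))).congr' hslope
  have hsplit : EqOn (fun u => u * G u / (w - u))
      (fun u => -(u * dslope G w u) + G w * (u / (w - u))) (sphere 0 |1|) := by
    intro u hu
    have hu1 : ‖u‖ = 1 := by simpa using hu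
    have huw : u ≠ w := fun h => hne u hu1 (by rw [h, sub_self])
    simp only [dslope_of_ne _ huw, slope_def_field, ← neg_sub w u]
    have := hne u hu1
    field_simp
    ring
  have hint₁ : CircleIntegrable (fun u => -(u * dslope G w u)) 0 1 :=
    ContinuousOn.circleIntegrable zero_le_one fun u hu =>
      (differentiableAt_id.mul (hdslope u (by simpa using (mem_sphere_zero_iff_norm.1 hu).ge))).neg
        |>.continuousAt.continuousWithinAt
  have hint₂ : CircleIntegrable (fun u => G w * (u / (w - u))) 0 1 :=
    ContinuousOn.circleIntegrable zero_le_one (continuousOn_const.mul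
      (continuousOn_id.div (continuousOn_const.sub continuousOn_id)
        fun u hu => hne u (mem_sphere_zero_iff_norm.1 hu)))
  rw [circleAverage_congr_sphere hsplit, circleAverage_fun_add hint₁ hint₂, hmean]
  simp only [← smul_eq_mul (G w)]
  rw [circleAverage_fun_smul, circleAverage_mul_div_sub_eq_zero hw, smul_zero, add_zero]

theorem circleAverage_mul_eq_circleIntegral (f : ℂ → ℂ) :
    circleAverage (fun w => w * f w) 0 1 = (2 * π * I)⁻¹ * ∮ w in C(0, 1), f w := by
  rw [circleAverage_eq_circleIntegral one_ne_zero, smul_eq_mul]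
  congr 1
  refine circleIntegral.integral_congr zero_le_one fun w hw => ?_
  have hw0 : w ≠ 0 := ne_zero_of_one_le_norm (mem_sphere_zero_iff_norm.1 hw).ge
  simp only [sub_zero, smul_eq_mul]
  exact inv_mul_cancel_left₀ hw0 _

theorem circleAverage_mul_deriv_eq_zero {F F' : ℂ → ℂ}
    (hF : ∀ w ∈ sphere (0 : ℂ) 1, HasDerivAt F (F' w) w) :
    circleAverage (fun w => w * F' w) 0 1 = 0 := by
  rw [circleAverage_mul_eq_circleIntegral, circleIntegral.integral_eq_zero_of_hasDerivWithinAt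
    zero_le_one fun w hw => (hF w hw).hasDerivWithinAt, mul_zero]

theorem circleAverage_mul_zpow_mul_eq_zero {g g' : ℂ → ℂ}
    (hg : ∀ w ∈ sphere (0 : ℂ) 1, HasDerivAt g (g' w) w) (hne : ∀ w ∈ sphere (0 : ℂ) 1, g w ≠ 0)
    {n : ℤ} (hn : n ≠ -1) : circleAverage (fun w => w * (g w ^ n * g' w)) 0 1 = 0 := by
  have hn1 : ((n + 1 : ℤ) : ℂ) ≠ 0 := Int.cast_ne_zero.2 fun h => hn (by omega)
  refine circleAverage_mul_deriv_eq_zero (F := fun w => g w ^ (n + 1) / ((n + 1 : ℤ) : ℂ))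
    fun w hw => ?_
  refine (((hasDerivAt_zpow (n + 1) (g w) (Or.inl (hne w hw))).comp w (hg w hw)).div_const
    _).congr_deriv ?_
  rw [add_sub_cancel_right]
  field_simp

theorem circleAverage_zpow (n : ℤ) :
    circleAverage (fun w : ℂ => w ^ n) 0 1 = if n = 0 then 1 else 0 := by
  split_ifs with hn
  · simpa only [hn, zpow_zero] using circleAverage_const (1 : ℂ) 0 1
  · have hne : ∀ w ∈ sphere (0 : ℂ) 1, w ≠ 0 := fun w hw =>
      ne_zero_of_one_le_norm (mem_sphere_zero_iff_norm.1 hw).ge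
    refine Eq.trans (circleAverage_congr_unitSphere fun w hw => ?_)
      (circleAverage_mul_zpow_mul_eq_zero (fun w _ => hasDerivAt_id' w) hne
        (n := n - 1) (by omega))
    simp only [mul_one]
    rw [mul_comm, ← zpow_add_one₀ (hne w hw), sub_add_cancel]

theorem tendsto_circleAverage_of_tendsto_inv_mul {f : ℂ → ℂ}
    (hf : ∀ w : ℂ, 1 ≤ ‖w‖ → DifferentiableAt ℂ f w)
    (h0 : Tendsto (fun w => w⁻¹ * f w) (Bornology.cobounded ℂ) (𝓝 0)) :
    Tendsto f (Bornology.cobounded ℂ) (𝓝 (circleAverage f 0 1)) := by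
  set g : ℂ → ℂ := fun w => f w⁻¹ with hg
  have hdiff : ∀ᶠ w in 𝓝[≠] (0 : ℂ), DifferentiableAt ℂ g w := by
    filter_upwards [nhdsWithin_le_nhds (ball_mem_nhds (0 : ℂ) one_pos), self_mem_nhdsWithin]
      with w hw hw0
    refine (hf w⁻¹ ?_).comp w (differentiableAt_inv hw0)
    rw [norm_inv]
    exact (one_le_inv₀ (norm_pos_iff.2 hw0)).2 (mem_ball_zero_iff.1 hw).le
  have hmul : Tendsto (fun w => w * g w) (𝓝[≠] 0) (𝓝 0) := by
    simpa [Function.comp_def] using h0.comp tendsto_inv₀_nhdsNE_zero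
  have hlittle : (fun w => g w - g 0) =o[𝓝[≠] 0] fun w => (w - 0)⁻¹ := by
    rw [Asymptotics.isLittleO_iff_tendsto' (by
      filter_upwards [self_mem_nhdsWithin] with w hw h
      exact absurd h (inv_ne_zero (by simpa using hw)))]
    have hid : Tendsto (fun w : ℂ => w * g 0) (𝓝[≠] 0) (𝓝 0) := by
      simpa using ((continuous_mul_const (g 0)).tendsto (0 : ℂ)).mono_left nhdsWithin_le_nhds
    simpa [mul_sub, mul_comm] using hmul.sub hid
  have hlim := (Complex.tendsto_limUnder_of_differentiable_on_punctured_nhds_of_isLittleO hdiff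
    hlittle).comp tendsto_inv₀_cobounded'
  simp only [hg, Function.comp_def, inv_inv] at hlim
  rwa [circleAverage_eq_of_tendsto_cobounded hf hlim]

theorem norm_circleAverage_le {f : ℂ → ℂ} {C : ℝ} (hf : ∀ w ∈ sphere (0 : ℂ) 1, ‖f w‖ ≤ C) :
    ‖circleAverage f 0 1‖ ≤ C := by
  rw [circleAverage_eq_circleIntegral one_ne_zero]
  refine (circleIntegral.norm_two_pi_i_inv_smul_integral_le_of_norm_le_const zero_le_one
    fun w hw => ?_).trans_eq (one_mul C)
  rw [norm_smul, norm_inv, sub_zero, mem_sphere_zero_iff_norm.1 hw, inv_one, one_mul]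
  exact hf w hw

/-! ### The Cauchy transform of area measure -/

theorem integrableOn_inv_ball (ρ : ℝ) : IntegrableOn (fun ζ : ℂ => ζ⁻¹) (ball 0 ρ) := by
  refine integrableOn_ball_of_norm_le_rpow (C := 1) (α := 1) ?_ ?_ ?_
    measurable_inv.aestronglyMeasurable
  · simp [Complex.finrank_real_complex]
  · simp [Complex.finrank_real_complex]
  · filter_upwards with ζ
    rw [norm_inv, Real.rpow_neg_one, one_mul]

theorem setIntegral_preimage_sub_left {E : Type*} [NormedAddCommGroup E] [NormedSpace ℝ E]
    (f : ℂ → E) (z : ℂ) (s : Set ℂ) :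
    ∫ ζ in (fun ζ => z - ζ) ⁻¹' s, f (z - ζ) = ∫ ζ in s, f ζ :=
  (Measure.measurePreserving_sub_left volume z).setIntegral_preimage_emb
    (MeasurableEquiv.subLeft z).measurableEmbedding f s

theorem integrableOn_inv_sub_ball (z : ℂ) (ρ : ℝ) :
    IntegrableOn (fun ζ : ℂ => (z - ζ)⁻¹) (ball z ρ) := by
  have := ((Measure.measurePreserving_sub_left volume z).integrableOn_comp_preimage
    (MeasurableEquiv.subLeft z).measurableEmbedding).2 (integrableOn_inv_ball ρ)
  refine this.mono_set fun ζ hζ => ?_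
  rwa [mem_preimage, mem_ball_zero_iff, ← mem_ball_iff_norm']

theorem ball_subset_ball_of_norm_le {z : ℂ} {ρ : ℝ} (hz : ‖z‖ ≤ ρ) :
    ball (0 : ℂ) ρ ⊆ ball z (2 * ρ) :=
  ball_subset (by rw [dist_zero_left]; linarith)

theorem integrableOn_inv_sub_ball_zero {z : ℂ} {ρ : ℝ} (hz : ‖z‖ ≤ ρ) :
    IntegrableOn (fun ζ : ℂ => (z - ζ)⁻¹) (ball 0 ρ) :=
  (integrableOn_inv_sub_ball z (2 * ρ)).mono_set (ball_subset_ball_of_norm_le hz)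

theorem setIntegral_norm_inv_sub_ball (z : ℂ) (ρ : ℝ) :
    ∫ ζ in ball z ρ, ‖(z - ζ)⁻¹‖ = ∫ ζ in ball (0 : ℂ) ρ, ‖ζ⁻¹‖ := by
  rw [← setIntegral_preimage_sub_left (fun ζ => ‖ζ⁻¹‖) z]
  congr 2
  ext ζ
  rw [mem_preimage, mem_ball_zero_iff, mem_ball_iff_norm']

theorem setIntegral_norm_inv_ball {ρ : ℝ} (hρ : 0 ≤ ρ) :
    ∫ ζ in ball (0 : ℂ) ρ, ‖ζ⁻¹‖ = 2 * π * ρ := by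
  have hpolar : ∀ p ∈ polarCoord.target,
      p.1 • (ball (0 : ℂ) ρ).indicator (fun ζ => ‖ζ⁻¹‖) (Complex.polarCoord.symm p) =
        (Ioo 0 ρ).indicator 1 p.1 * (1 : ℝ) := by
    intro p hp
    have hp0 : 0 < p.1 := hp.1
    have hnorm : ‖Complex.polarCoord.symm p‖ = p.1 := by
      rw [Complex.norm_polarCoord_symm, abs_of_pos hp0]
    by_cases hpρ : p.1 < ρ
    · rw [indicator_of_mem (by rwa [mem_ball_zero_iff, hnorm]), norm_inv, hnorm, smul_eq_mul,
        indicator_of_mem (show p.1 ∈ Ioo 0 ρ from ⟨hp0, hpρ⟩), mul_inv_cancel₀ hp0.ne']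
      simp
    · rw [indicator_of_notMem (by rwa [mem_ball_zero_iff, hnorm]),
        indicator_of_notMem fun h => hpρ h.2, smul_zero, zero_mul]
  rw [← integral_indicator measurableSet_ball, ← Complex.integral_comp_polarCoord_symm,
    setIntegral_congr_fun polarCoord.open_target.measurableSet hpolar,
    show polarCoord.target = Ioi (0 : ℝ) ×ˢ Ioo (-π) π from rfl, Measure.volume_eq_prod,
    setIntegral_prod_mul (fun t : ℝ => (Ioo 0 ρ).indicator 1 t) (fun _ => (1 : ℝ)),
    setIntegral_indicator measurableSet_Ioo,
    inter_eq_self_of_subset_right (Ioo_subset_Ioi_self : Ioo (0 : ℝ) ρ ⊆ Ioi 0)]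
  have hpi := Real.pi_pos
  simp [hρ, hpi.le]
  ring

theorem setIntegral_norm_inv_sub_le {D : Set ℂ} (hD : MeasurableSet D) (hDfin : volume D ≠ ⊤)
    {z : ℂ}
    (hDint : IntegrableOn (fun ζ : ℂ => (z - ζ)⁻¹) D) {ρ : ℝ} (hρ : 0 < ρ) :
    ∫ ζ in D, ‖(z - ζ)⁻¹‖ ≤ 2 * π * ρ + volume.real D / ρ := by
  rw [← integral_inter_add_sdiff measurableSet_ball hDint.norm (t := ball z ρ)]
  refine add_le_add ?_ ?_
  · rw [← setIntegral_norm_inv_ball hρ.le, ← setIntegral_norm_inv_sub_ball z]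
    exact setIntegral_mono_set (integrableOn_inv_sub_ball z ρ).norm
      (ae_of_all _ fun _ => norm_nonneg _) inter_subset_right.eventuallyLE
  · have hfin : volume (D \ ball z ρ) ≠ ⊤ := measure_ne_top_of_subset sdiff_subset hDfin
    calc ∫ ζ in D \ ball z ρ, ‖(z - ζ)⁻¹‖ ≤ ∫ _ in D \ ball z ρ, ρ⁻¹ := by
          refine setIntegral_mono_on (hDint.mono_set sdiff_subset).norm
            (integrableOn_const hfin) (hD.diff measurableSet_ball) fun ζ hζ => ?_
          rw [norm_inv]
          gcongr
          simpa [dist_eq_norm, norm_sub_rev] using hζ.2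
      _ = volume.real (D \ ball z ρ) * ρ⁻¹ := by rw [setIntegral_const, smul_eq_mul]
      _ ≤ volume.real D / ρ := by
          rw [div_eq_mul_inv]
          gcongr
          exact sdiff_subset

theorem circleAverage_inv_sub {z : ℂ} {r : ℝ} (hr : 0 < r) (hrz : r ≠ ‖z‖) :
    circleAverage (fun ζ => (z - ζ)⁻¹) 0 r = if r < ‖z‖ then z⁻¹ else 0 := by
  split_ifs with h
  · have hne : ∀ ζ ∈ closedBall (0 : ℂ) |r|, z - ζ ≠ 0 := by
      rintro ζ hζ h0
      rw [sub_eq_zero] at h0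
      rw [mem_closedBall_zero_iff, ← h0, abs_of_pos hr] at hζ
      exact h.not_ge hζ
    have hdiff : DifferentiableOn ℂ (fun ζ => (z - ζ)⁻¹) (closedBall 0 |r|) := fun ζ hζ =>
      ((differentiableAt_id.const_sub z).inv (hne ζ hζ)).differentiableWithinAt
    simpa using (hdiff.diffContOnCl_ball subset_rfl).circleAverage
  · have hlt : ‖z‖ < r := lt_of_le_of_ne (not_lt.1 h) hrz.symm
    have hr0 : (r : ℂ) ≠ 0 := ofReal_ne_zero.2 hr.ne'
    rw [circleAverage_eq_circleAverage_zero_one]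
    refine circleAverage_eq_of_tendsto_cobounded (fun w hw => ?_) ?_
    · have hne : z - (r * w + 0) ≠ 0 := by
        rw [add_zero, sub_ne_zero]
        rintro rfl
        rw [norm_mul, Complex.norm_real, Real.norm_of_nonneg hr.le] at hlt
        nlinarith
      fun_prop (disch := assumption)
    · refine tendsto_inv₀_cobounded.comp ?_
      simp only [add_zero]
      exact (tendsto_const_sub_cobounded z).comp (tendsto_mul_left_cobounded hr0)

theorem integrableOn_polarCoord_symm {f : ℂ → ℂ} (hm : Measurable f) (hf : Integrable f) :
    IntegrableOn (fun p : ℝ × ℝ => p.1 • f (Complex.polarCoord.symm p)) polarCoord.target := by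
  have hmeas : Measurable (fun p : ℝ × ℝ => Complex.polarCoord.symm p) := by
    simp only [Complex.polarCoord_symm_apply]
    fun_prop
  refine ⟨(measurable_fst.smul (hm.comp hmeas)).aestronglyMeasurable, ?_⟩
  have henorm : ∫⁻ p in polarCoord.target, ‖p.1 • f (Complex.polarCoord.symm p)‖ₑ =
      ∫⁻ p in polarCoord.target, ENNReal.ofReal p.1 • ‖f (Complex.polarCoord.symm p)‖ₑ :=
    setLIntegral_congr_fun polarCoord.open_target.measurableSet fun p hp => by
      simp only [enorm_smul, smul_eq_mul, Real.enorm_of_nonneg (show 0 ≤ p.1 from le_of_lt hp.1)]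
  rw [hasFiniteIntegral_iff_enorm, henorm,
    Complex.lintegral_comp_polarCoord_symm fun ζ => ‖f ζ‖ₑ]
  exact hf.2

theorem integral_eq_integral_mul_circleAverage {f : ℂ → ℂ} (hm : Measurable f)
    (hf : Integrable f) :
    ∫ ζ, f ζ = ∫ r in Ioi (0 : ℝ), (2 * π * r : ℝ) * circleAverage f 0 r := by
  have hint := integrableOn_polarCoord_symm hm hf
  rw [← Complex.integral_comp_polarCoord_symm]
  rw [show polarCoord.target = Ioi (0 : ℝ) ×ˢ Ioo (-π) π from rfl, Measure.volume_eq_prod] at hint ⊢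
  rw [setIntegral_prod _ hint]
  refine setIntegral_congr_fun measurableSet_Ioi fun r _ => ?_
  have hcircle : ∀ θ : ℝ, Complex.polarCoord.symm (r, θ) = circleMap 0 r θ := fun θ => by
    rw [Complex.polarCoord_symm_apply, circleMap_zero, exp_mul_I, ofReal_cos, ofReal_sin]
  have hper : Function.Periodic (fun θ => f (circleMap 0 r θ)) (2 * π) := fun θ => by
    simp only [periodic_circleMap 0 r θ]
  have hshift := hper.intervalIntegral_add_eq (-π) 0
  rw [show -π + 2 * π = π by ring, zero_add, intervalIntegral.integral_of_le (by
    linarith [Real.pi_pos]), integral_Ioc_eq_integral_Ioo] at hshift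
  simp only [hcircle, circleAverage, real_smul, integral_const_mul, hshift]
  have : (π : ℂ) ≠ 0 := ofReal_ne_zero.2 Real.pi_ne_zero
  push_cast
  field_simp

theorem setIntegral_ball_inv_sub {z : ℂ} {ρ : ℝ} (hz : ‖z‖ < ρ) :
    ∫ ζ in ball (0 : ℂ) ρ, (z - ζ)⁻¹ = π * (starRingEnd ℂ) z := by
  have hmeas : Measurable ((ball (0 : ℂ) ρ).indicator fun ζ => (z - ζ)⁻¹) :=
    ((measurable_const.sub measurable_id).inv).indicator measurableSet_ball
  have hint : Integrable ((ball (0 : ℂ) ρ).indicator fun ζ => (z - ζ)⁻¹) :=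
    (integrable_indicator_iff measurableSet_ball).2 (integrableOn_inv_sub_ball_zero hz.le)
  have hradial : ∀ᵐ r : ℝ, r ∈ Ioi (0 : ℝ) →
      (2 * π * r : ℝ) * circleAverage ((ball (0 : ℂ) ρ).indicator fun ζ => (z - ζ)⁻¹) 0 r =
        (Ioo (0 : ℝ) ‖z‖).indicator (fun r : ℝ => (2 * π * z⁻¹) * (r : ℂ)) r := by
    have hne : ∀ᵐ r : ℝ, r ≠ ‖z‖ := by simp [ae_iff]
    filter_upwards [hne] with r hr (hr0 : 0 < r)
    have hsphere : ∀ ζ ∈ sphere (0 : ℂ) |r|, ‖ζ‖ = r := fun ζ hζ => by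
      rw [mem_sphere_zero_iff_norm.1 hζ, abs_of_pos hr0]
    by_cases hrρ : r < ρ
    · have hin : EqOn ((ball (0 : ℂ) ρ).indicator fun ζ => (z - ζ)⁻¹) (fun ζ => (z - ζ)⁻¹)
          (sphere 0 |r|) := fun ζ hζ =>
        indicator_of_mem (by rwa [mem_ball_zero_iff, hsphere ζ hζ]) _
      rw [circleAverage_congr_sphere hin, circleAverage_inv_sub hr0 hr]
      by_cases hlt : r < ‖z‖
      · rw [if_pos hlt, indicator_of_mem (show r ∈ Ioo (0 : ℝ) ‖z‖ from ⟨hr0, hlt⟩)]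
        push_cast
        ring
      · rw [if_neg hlt, indicator_of_notMem fun h => hlt h.2, mul_zero]
    · have hout : EqOn ((ball (0 : ℂ) ρ).indicator fun ζ => (z - ζ)⁻¹) (fun _ => 0)
          (sphere 0 |r|) := fun ζ hζ =>
        indicator_of_notMem (by rwa [mem_ball_zero_iff, hsphere ζ hζ]) _
      rw [circleAverage_congr_sphere hout, circleAverage_const, mul_zero,
        indicator_of_notMem fun h => hrρ (h.2.trans hz)]
  rw [← integral_indicator measurableSet_ball, integral_eq_integral_mul_circleAverage hmeas hint,
    setIntegral_congr_ae measurableSet_Ioi hradial, setIntegral_indicator measurableSet_Ioo,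
    inter_eq_self_of_subset_right (Ioo_subset_Ioi_self : Ioo (0 : ℝ) ‖z‖ ⊆ Ioi 0),
    integral_const_mul, ← integral_Ioc_eq_integral_Ioo,
    ← intervalIntegral.integral_of_le (norm_nonneg z), intervalIntegral.integral_ofReal,
    integral_id]
  rcases eq_or_ne z 0 with rfl | hz0
  · simp
  · have : (‖z‖ : ℂ) ^ 2 = z * (starRingEnd ℂ) z := by rw [mul_conj, normSq_eq_norm_sq]; norm_cast
    push_cast
    rw [zero_pow two_ne_zero, sub_zero, this]
    field_simp

theorem continuous_comp_circleMap {f : ℂ → ℂ} (hf : ContinuousOn f (sphere 0 1)) :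
    Continuous fun θ : ℝ => f (circleMap 0 1 θ) :=
  hf.comp_continuous (continuous_circleMap 0 1) fun θ => circleMap_mem_sphere 0 zero_le_one θ

theorem integrable_prod_mul_inv_sub {f φ : ℂ → ℂ} {ρ : ℝ} (hf : ContinuousOn f (sphere 0 1))
    (hφ : ContinuousOn φ (sphere 0 1)) (hρ : ∀ w ∈ sphere (0 : ℂ) 1, ‖f w‖ < ρ) :
    Integrable (fun x : ℝ × ℂ => φ (circleMap 0 1 x.1) * (f (circleMap 0 1 x.1) - x.2)⁻¹)
      ((volume.restrict (Ioc 0 (2 * π))).prod (volume.restrict (ball (0 : ℂ) ρ))) := by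
  have hmem : ∀ θ, circleMap (0 : ℂ) 1 θ ∈ sphere (0 : ℂ) 1 := circleMap_mem_sphere 0 zero_le_one
  have hmeas : Measurable fun x : ℝ × ℂ =>
      φ (circleMap 0 1 x.1) * (f (circleMap 0 1 x.1) - x.2)⁻¹ :=
    ((continuous_comp_circleMap hφ).measurable.comp measurable_fst).mul
      ((((continuous_comp_circleMap hf).measurable.comp measurable_fst).sub measurable_snd).inv)
  rw [integrable_prod_iff hmeas.aestronglyMeasurable]
  refine ⟨ae_of_all _ fun θ =>
    (integrableOn_inv_sub_ball_zero (hρ _ (hmem θ)).le).const_mul (φ (circleMap 0 1 θ)), ?_⟩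
  obtain ⟨M, hM⟩ := (isCompact_sphere (0 : ℂ) 1).exists_bound_of_continuousOn hφ
  have hconst : IntegrableOn (fun _ : ℝ => M * ∫ ζ in ball (0 : ℂ) (2 * ρ), ‖ζ⁻¹‖)
      (Ioc 0 (2 * π)) := integrableOn_const (by rw [Real.volume_Ioc]; exact ENNReal.ofReal_ne_top)
  refine Integrable.mono' hconst hmeas.aestronglyMeasurable.norm.integral_prod_right'
    (ae_of_all _ fun θ => ?_)
  have hkernel : ∫ ζ in ball (0 : ℂ) ρ, ‖(f (circleMap 0 1 θ) - ζ)⁻¹‖ ≤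
      ∫ ζ in ball (0 : ℂ) (2 * ρ), ‖ζ⁻¹‖ := by
    rw [← setIntegral_norm_inv_sub_ball (f (circleMap 0 1 θ))]
    exact setIntegral_mono_set (integrableOn_inv_sub_ball _ _).norm
      (ae_of_all _ fun _ => norm_nonneg _)
      (ball_subset_ball_of_norm_le (hρ _ (hmem θ)).le).eventuallyLE
  simp only [norm_mul]
  rw [integral_const_mul, norm_mul, norm_norm,
    Real.norm_of_nonneg (integral_nonneg fun _ => norm_nonneg _)]
  exact mul_le_mul (hM _ (hmem θ)) hkernel (integral_nonneg fun _ => norm_nonneg _)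
    ((norm_nonneg _).trans (hM _ (hmem θ)))

theorem circleAverage_conj_mul {f φ : ℂ → ℂ} {ρ : ℝ} (hf : ContinuousOn f (sphere 0 1))
    (hφ : ContinuousOn φ (sphere 0 1)) (hρ : ∀ w ∈ sphere (0 : ℂ) 1, ‖f w‖ < ρ) :
    π * circleAverage (fun w => (starRingEnd ℂ) (f w) * φ w) 0 1 =
      ∫ ζ in ball (0 : ℂ) ρ, circleAverage (fun w => φ w * (f w - ζ)⁻¹) 0 1 := by
  have hmem : ∀ θ, circleMap (0 : ℂ) 1 θ ∈ sphere (0 : ℂ) 1 := circleMap_mem_sphere 0 zero_le_one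
  have hswap := integral_integral_swap
    (f := fun θ ζ => φ (circleMap 0 1 θ) * (f (circleMap 0 1 θ) - ζ)⁻¹)
    (integrable_prod_mul_inv_sub hf hφ hρ)
  have hpi : (0 : ℝ) ≤ 2 * π := by positivity
  simp only [circleAverage, intervalIntegral.integral_of_le hpi]
  rw [integral_smul, ← hswap, mul_smul_comm, ← integral_const_mul]
  congr 1
  refine integral_congr_ae (ae_of_all _ fun θ => ?_)
  simp only [integral_const_mul, setIntegral_ball_inv_sub (hρ _ (hmem θ))]
  ring

/-! ### Polynomial curves -/

variable {d : ℕ} {r : ℝ} {a : Fin (d + 1) → ℂ}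

theorem polyParam_apply (w : ℂ) :
    polyParam d r a w = r * w + ∑ j, a j * w⁻¹ ^ (j : ℕ) := by
  simp only [polyParam, zpow_neg, zpow_natCast, inv_pow]

theorem hasDerivAt_inv_pow (n : ℕ) {w : ℂ} (hw : w ≠ 0) :
    HasDerivAt (fun w : ℂ => w⁻¹ ^ n) (-(n * w⁻¹ ^ (n + 1))) w := by
  refine ((hasDerivAt_inv hw).fun_pow n).congr_deriv ?_
  rcases n with _ | n
  · simp
  · rw [Nat.add_sub_cancel, ← inv_pow]
    ring

theorem hasDerivAt_polyParam {w : ℂ} (hw : w ≠ 0) :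
    HasDerivAt (polyParam d r a) (r - ∑ j, a j * ((j : ℕ) * w⁻¹ ^ ((j : ℕ) + 1))) w := by
  rw [show polyParam d r a = fun w => r * w + ∑ j, a j * w⁻¹ ^ (j : ℕ) from
    funext polyParam_apply]
  have hsum : HasDerivAt (fun w : ℂ => ∑ j, a j * w⁻¹ ^ (j : ℕ))
      (∑ j, a j * -((j : ℕ) * w⁻¹ ^ ((j : ℕ) + 1))) w :=
    HasDerivAt.fun_sum fun j _ => (hasDerivAt_inv_pow j hw).const_mul (a j)
  refine (((hasDerivAt_id' w).const_mul (r : ℂ)).fun_add hsum).congr_deriv ?_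
  simp only [mul_one, mul_neg, Finset.sum_neg_distrib, sub_eq_add_neg]

theorem differentiableAt_polyParam {w : ℂ} (hw : w ≠ 0) :
    DifferentiableAt ℂ (polyParam d r a) w :=
  (hasDerivAt_polyParam hw).differentiableAt

theorem analyticAt_polyParam {w : ℂ} (hw : w ≠ 0) : AnalyticAt ℂ (polyParam d r a) w :=
  DifferentiableOn.analyticAt (s := {0}ᶜ)
    (fun _ hz => (differentiableAt_polyParam hz).differentiableWithinAt)
    (isOpen_compl_singleton.mem_nhds hw)

theorem differentiableAt_deriv_polyParam {w : ℂ} (hw : w ≠ 0) :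
    DifferentiableAt ℂ (deriv (polyParam d r a)) w :=
  (analyticAt_polyParam hw).deriv.differentiableAt

theorem continuousOn_polyParam_sphere : ContinuousOn (polyParam d r a) (sphere 0 1) := fun _ hw =>
  (differentiableAt_polyParam (ne_zero_of_one_le_norm (mem_sphere_zero_iff_norm.1 hw).ge))
    |>.continuousAt.continuousWithinAt

theorem continuousOn_deriv_polyParam_sphere :
    ContinuousOn (deriv (polyParam d r a)) (sphere 0 1) := fun _ hw =>
  (differentiableAt_deriv_polyParam (ne_zero_of_one_le_norm (mem_sphere_zero_iff_norm.1 hw).ge))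
    |>.continuousAt.continuousWithinAt

theorem tendsto_deriv_polyParam :
    Tendsto (deriv (polyParam d r a)) (Bornology.cobounded ℂ) (𝓝 r) := by
  have hterm : ∀ j : Fin (d + 1), Tendsto (fun w : ℂ => a j * ((j : ℕ) * w⁻¹ ^ ((j : ℕ) + 1)))
      (Bornology.cobounded ℂ) (𝓝 0) := fun j => by
    simpa using ((tendsto_inv₀_cobounded.pow ((j : ℕ) + 1)).const_mul ((j : ℕ) : ℂ)).const_mul (a j)
  have hsum := (tendsto_finsetSum Finset.univ fun j _ => hterm j).const_sub (r : ℂ)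
  rw [Finset.sum_const_zero, sub_zero] at hsum
  refine hsum.congr' ?_
  filter_upwards [Bornology.eventually_ne_cobounded 0] with w hw
  exact (hasDerivAt_polyParam hw).deriv.symm

theorem tendsto_polyParam_div :
    Tendsto (fun w => polyParam d r a w / w) (Bornology.cobounded ℂ) (𝓝 r) := by
  have hterm : ∀ j : Fin (d + 1), Tendsto (fun w : ℂ => a j * w⁻¹ ^ ((j : ℕ) + 1))
      (Bornology.cobounded ℂ) (𝓝 0) := fun j => by
    simpa using (tendsto_inv₀_cobounded.pow ((j : ℕ) + 1)).const_mul (a j)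
  have hsum := (tendsto_finsetSum Finset.univ fun j _ => hterm j).const_add (r : ℂ)
  rw [Finset.sum_const_zero, add_zero] at hsum
  refine hsum.congr' ?_
  filter_upwards [Bornology.eventually_ne_cobounded 0] with w hw
  rw [polyParam_apply, add_div, mul_div_cancel_right₀ _ hw, Finset.sum_div]
  simp only [pow_succ, mul_assoc, div_eq_mul_inv]

theorem tendsto_polyParam_cobounded (hr : 0 < r) :
    Tendsto (polyParam d r a) (Bornology.cobounded ℂ) (Bornology.cobounded ℂ) := by
  rw [← tendsto_norm_atTop_iff_cobounded]
  have hlim : 0 < ‖(r : ℂ)‖ := norm_pos_iff.2 (ofReal_ne_zero.2 hr.ne')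
  refine ((tendsto_polyParam_div (a := a)).norm.pos_mul_atTop hlim
    tendsto_norm_cobounded_atTop).congr' ?_
  filter_upwards [Bornology.eventually_ne_cobounded 0] with w hw
  rw [← norm_mul, div_mul_cancel₀ _ hw]

/-- The divided difference `(h w - h u) / (w - u)` of `h = polyParam d r a`, extended to the
diagonal by `h'`. -/
noncomputable def polyParamSlope (d : ℕ) (r : ℝ) (a : Fin (d + 1) → ℂ) (w u : ℂ) : ℂ :=
  r - w⁻¹ * u⁻¹ * ∑ j, a j * ∑ i ∈ Finset.range j, w⁻¹ ^ i * u⁻¹ ^ ((j : ℕ) - 1 - i)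

theorem polyParam_sub {w u : ℂ} (hw : w ≠ 0) (hu : u ≠ 0) :
    polyParam d r a w - polyParam d r a u = (w - u) * polyParamSlope d r a w u := by
  have hinv : w⁻¹ - u⁻¹ = -((w - u) * (w⁻¹ * u⁻¹)) := by
    field_simp
    ring
  have hterm : ∀ j : Fin (d + 1), a j * w⁻¹ ^ (j : ℕ) - a j * u⁻¹ ^ (j : ℕ) =
      -((w - u) * (w⁻¹ * u⁻¹)) *
        (a j * ∑ i ∈ Finset.range j, w⁻¹ ^ i * u⁻¹ ^ ((j : ℕ) - 1 - i)) := fun j => by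
    rw [← mul_sub, ← geom_sum₂_mul, hinv]
    ring
  rw [polyParam_apply, polyParam_apply, add_sub_add_comm, ← Finset.sum_sub_distrib,
    Finset.sum_congr rfl fun j _ => hterm j, ← Finset.mul_sum, polyParamSlope]
  ring

theorem polyParamSlope_self {w : ℂ} (hw : w ≠ 0) :
    polyParamSlope d r a w w = deriv (polyParam d r a) w := by
  rw [(hasDerivAt_polyParam hw).deriv, polyParamSlope, Finset.mul_sum]
  congr 1
  refine Finset.sum_congr rfl fun j _ => ?_
  have hpow : ∀ i ∈ Finset.range (j : ℕ), w⁻¹ ^ i * w⁻¹ ^ ((j : ℕ) - 1 - i) = w⁻¹ ^ ((j : ℕ) - 1) :=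
    fun i hi => by
      rw [Finset.mem_range] at hi
      rw [← pow_add]
      congr 1
      omega
  rw [Finset.sum_congr rfl hpow, Finset.sum_const, Finset.card_range, nsmul_eq_mul]
  rcases Nat.eq_zero_or_pos (j : ℕ) with h | h
  · simp [h]
  · rw [← Nat.sub_add_cancel (show 1 ≤ (j : ℕ) from h), Nat.add_sub_cancel]
    ring

theorem mul_norm_le_of_polyParamSlope_eq_zero {w u : ℂ} (hr : 0 ≤ r) (hw : 1 ≤ ‖w‖) (hu : 1 ≤ ‖u‖)
    (h : polyParamSlope d r a w u = 0) : r * (‖w‖ * ‖u‖) ≤ ∑ j : Fin (d + 1), (j : ℕ) * ‖a j‖ := by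
  have hw0 := ne_zero_of_one_le_norm hw
  have hu0 := ne_zero_of_one_le_norm hu
  have heq : r * (w * u) =
      ∑ j, a j * ∑ i ∈ Finset.range j, w⁻¹ ^ i * u⁻¹ ^ ((j : ℕ) - 1 - i) := by
    rw [sub_eq_zero.1 h]
    field_simp
  calc r * (‖w‖ * ‖u‖) = ‖(r : ℂ) * (w * u)‖ := by
        rw [norm_mul, norm_mul, Complex.norm_real, Real.norm_of_nonneg hr]
    _ ≤ ∑ j, ‖a j * ∑ i ∈ Finset.range j, w⁻¹ ^ i * u⁻¹ ^ ((j : ℕ) - 1 - i)‖ :=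
        heq ▸ norm_sum_le _ _
    _ ≤ ∑ j : Fin (d + 1), (j : ℕ) * ‖a j‖ := by
        refine Finset.sum_le_sum fun j _ => ?_
        rw [norm_mul, mul_comm]
        gcongr
        have hterm : ∀ i ∈ Finset.range (j : ℕ), ‖w⁻¹ ^ i * u⁻¹ ^ ((j : ℕ) - 1 - i)‖ ≤ 1 :=
          fun i _ => by
            rw [norm_mul, norm_pow, norm_pow, norm_inv, norm_inv]
            exact mul_le_one₀ (pow_le_one₀ (by positivity) (inv_le_one_of_one_le₀ hw))
              (by positivity) (pow_le_one₀ (by positivity) (inv_le_one_of_one_le₀ hu))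
        simpa using norm_sum_le_of_le _ hterm

theorem continuousOn_polyParamSlope :
    ContinuousOn (fun x : ℂ × ℂ => polyParamSlope d r a x.1 x.2) {x | 1 ≤ ‖x.1‖ ∧ 1 ≤ ‖x.2‖} := by
  have hfst : ContinuousOn (fun x : ℂ × ℂ => x.1⁻¹) {x | 1 ≤ ‖x.1‖ ∧ 1 ≤ ‖x.2‖} :=
    continuous_fst.continuousOn.inv₀ fun x hx => ne_zero_of_one_le_norm hx.1
  have hsnd : ContinuousOn (fun x : ℂ × ℂ => x.2⁻¹) {x | 1 ≤ ‖x.1‖ ∧ 1 ≤ ‖x.2‖} :=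
    continuous_snd.continuousOn.inv₀ fun x hx => ne_zero_of_one_le_norm hx.2
  unfold polyParamSlope
  fun_prop

theorem isCompact_zeros_polyParamSlope (hr : 0 < r) :
    IsCompact {x : ℂ × ℂ | (1 ≤ ‖x.1‖ ∧ 1 ≤ ‖x.2‖) ∧ polyParamSlope d r a x.1 x.2 = 0} := by
  refine Metric.isCompact_of_isClosed_isBounded ?_ ?_
  · exact continuousOn_polyParamSlope.preimage_isClosed_of_isClosed
      ((isClosed_le continuous_const continuous_fst.norm).inter
        (isClosed_le continuous_const continuous_snd.norm)) isClosed_singleton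
  · refine isBounded_iff_forall_norm_le.2
      ⟨(∑ j : Fin (d + 1), (j : ℕ) * ‖a j‖) / r, fun x ⟨⟨hw, hu⟩, hx⟩ => ?_⟩
    have hle : ‖x.1‖ * ‖x.2‖ ≤ (∑ j : Fin (d + 1), (j : ℕ) * ‖a j‖) / r :=
      (le_div_iff₀' hr).2 (mul_norm_le_of_polyParamSlope_eq_zero hr.le hw hu hx)
    exact (Prod.norm_def x).trans_le (max_le (by nlinarith) (by nlinarith))

/-! ### Univalence in the exterior of the unit disc -/

theorem isOpen_one_lt_norm : IsOpen {w : ℂ | 1 < ‖w‖} :=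
  isOpen_lt continuous_const continuous_norm

theorem isClosed_one_le_norm : IsClosed {w : ℂ | 1 ≤ ‖w‖} :=
  isClosed_le continuous_const continuous_norm

theorem polyParamSlope_eq_zero_iff (hderiv : ∀ w : ℂ, 1 ≤ ‖w‖ → deriv (polyParam d r a) w ≠ 0)
    {w u : ℂ} (hw : 1 ≤ ‖w‖) (hu : 1 ≤ ‖u‖) :
    polyParamSlope d r a w u = 0 ↔ w ≠ u ∧ polyParam d r a w = polyParam d r a u := by
  have hw0 := ne_zero_of_one_le_norm hw
  rw [← sub_eq_zero (a := polyParam d r a w),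
    polyParam_sub hw0 (ne_zero_of_one_le_norm hu), mul_eq_zero, sub_eq_zero]
  refine ⟨fun h => ⟨?_, Or.inr h⟩, fun h => h.2.resolve_left h.1⟩
  rintro rfl
  exact hderiv w hw (polyParamSlope_self hw0 ▸ h)

theorem map_nhds_polyParam {w : ℂ} (hw : w ≠ 0) (hderiv : deriv (polyParam d r a) w ≠ 0) :
    map (polyParam d r a) (𝓝 w) = 𝓝 (polyParam d r a w) :=
  (analyticAt_polyParam hw).hasStrictDerivAt.map_nhds_eq hderiv

theorem isOpen_image_polyParam
    (hderiv : ∀ w : ℂ, 1 ≤ ‖w‖ → deriv (polyParam d r a) w ≠ 0) {s : Set ℂ} (hs : IsOpen s)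
    (hs1 : s ⊆ {w | 1 < ‖w‖}) : IsOpen (polyParam d r a '' s) := by
  rw [isOpen_iff_mem_nhds]
  rintro _ ⟨u, hu, rfl⟩
  have hu1 : 1 ≤ ‖u‖ := (hs1 hu).le
  rw [← map_nhds_polyParam (ne_zero_of_one_le_norm hu1) (hderiv u hu1)]
  exact image_mem_map (hs.mem_nhds hu)

theorem isClosed_image_polyParam (hr : 0 < r) :
    IsClosed (polyParam d r a '' {w | 1 ≤ ‖w‖}) := by
  have hcont : Continuous fun w : {w : ℂ | 1 ≤ ‖w‖} => polyParam d r a w :=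
    continuous_iff_continuousAt.2 fun w =>
      (differentiableAt_polyParam (ne_zero_of_one_le_norm w.2)).continuousAt.comp
        continuous_subtype_val.continuousAt
  have hproper : IsProperMap fun w : {w : ℂ | 1 ≤ ‖w‖} => polyParam d r a w := by
    have h := tendsto_polyParam_cobounded (a := a) hr
    rw [Metric.cobounded_eq_cocompact] at h
    exact isProperMap_iff_tendsto_cocompact.2
      ⟨hcont, h.comp isClosed_one_le_norm.isClosedEmbedding_subtypeVal.tendsto_cocompact⟩
  rw [image_eq_range]
  exact hproper.isClosedMap.isClosed_range

/-- The points of `{1 ≤ ‖w‖}` whose value under `polyParam d r a` is attained again at another point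
of that set, described as the projection of the zero set of the divided difference (equivalent as
long as the derivative has no zeros there). -/
def doublePoints (d : ℕ) (r : ℝ) (a : Fin (d + 1) → ℂ) : Set ℂ :=
  Prod.fst '' {x : ℂ × ℂ | (1 ≤ ‖x.1‖ ∧ 1 ≤ ‖x.2‖) ∧ polyParamSlope d r a x.1 x.2 = 0}

theorem isCompact_doublePoints (hr : 0 < r) : IsCompact (doublePoints d r a) :=
  (isCompact_zeros_polyParamSlope hr).image continuous_fst

theorem mem_doublePoints_iff (hderiv : ∀ w : ℂ, 1 ≤ ‖w‖ → deriv (polyParam d r a) w ≠ 0) {w : ℂ} :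
    w ∈ doublePoints d r a ↔
      1 ≤ ‖w‖ ∧ ∃ u, 1 ≤ ‖u‖ ∧ w ≠ u ∧ polyParam d r a w = polyParam d r a u := by
  constructor
  · rintro ⟨⟨w, u⟩, ⟨⟨hw, hu⟩, h⟩, rfl⟩
    exact ⟨hw, u, hu, (polyParamSlope_eq_zero_iff hderiv hw hu).1 h⟩
  · rintro ⟨hw, u, hu, h⟩
    exact ⟨(w, u), ⟨⟨hw, hu⟩, (polyParamSlope_eq_zero_iff hderiv hw hu).2 h⟩, rfl⟩

theorem mem_doublePoints_iff_of_mem_sphere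
    (hderiv : ∀ w : ℂ, 1 ≤ ‖w‖ → deriv (polyParam d r a) w ≠ 0)
    (hinj : InjOn (polyParam d r a) (sphere 0 1)) {w : ℂ} (hw : w ∈ sphere (0 : ℂ) 1) :
    w ∈ doublePoints d r a ↔ polyParam d r a w ∈ polyParam d r a '' {u | 1 < ‖u‖} := by
  have hw1 : ‖w‖ = 1 := mem_sphere_zero_iff_norm.1 hw
  rw [mem_doublePoints_iff hderiv]
  constructor
  · rintro ⟨-, u, hu, hne, heq⟩
    refine ⟨u, lt_of_le_of_ne hu fun h => hne (hinj hw ?_ heq), heq.symm⟩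
    exact mem_sphere_zero_iff_norm.2 h.symm
  · rintro ⟨u, hu, heq⟩
    have hu1 : 1 < ‖u‖ := hu
    exact ⟨hw1.ge, u, hu1.le, fun h => hu1.ne' (h ▸ hw1), heq.symm⟩

theorem isPreconnected_unitSphere : IsPreconnected (sphere (0 : ℂ) 1) :=
  isPreconnected_sphere (by rw [rank_real_complex]; exact Nat.one_lt_ofNat) 0 1

theorem sphere_subset_preimage_or_disjoint_doublePoints (hr : 0 < r)
    (hderiv : ∀ w : ℂ, 1 ≤ ‖w‖ → deriv (polyParam d r a) w ≠ 0)
    (hinj : InjOn (polyParam d r a) (sphere 0 1)) :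
    sphere 0 1 ⊆ polyParam d r a ⁻¹' (polyParam d r a '' {u | 1 < ‖u‖}) ∨
      sphere 0 1 ⊆ (doublePoints d r a)ᶜ := by
  set U : Set ℂ := {0}ᶜ ∩ polyParam d r a ⁻¹' (polyParam d r a '' {u | 1 < ‖u‖})
  have hU : IsOpen U := ContinuousOn.isOpen_inter_preimage
    (fun w hw => (differentiableAt_polyParam hw).continuousAt.continuousWithinAt)
    isOpen_compl_singleton (isOpen_image_polyParam hderiv isOpen_one_lt_norm subset_rfl)
  have hiff : ∀ w ∈ sphere (0 : ℂ) 1, (w ∈ U ↔ w ∈ doublePoints d r a) := fun w hw => by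
    rw [mem_doublePoints_iff_of_mem_sphere hderiv hinj hw]
    exact and_iff_right (ne_zero_of_one_le_norm (mem_sphere_zero_iff_norm.1 hw).ge)
  have hcover : sphere (0 : ℂ) 1 ⊆ U ∪ (doublePoints d r a)ᶜ := fun w hw => by
    rw [mem_union, hiff w hw]
    exact em _
  have hdisj : sphere (0 : ℂ) 1 ∩ (U ∩ (doublePoints d r a)ᶜ) = ∅ :=
    eq_empty_of_forall_notMem fun w ⟨hw, hwU, hwD⟩ => hwD ((hiff w hw).1 hwU)
  exact (isPreconnected_iff_subset_of_disjoint.1 isPreconnected_unitSphere U _ hU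
    (isCompact_doublePoints hr).isClosed.isOpen_compl hcover hdisj).imp_left
    fun h => h.trans inter_subset_right

theorem image_exterior_eq_univ (hr : 0 < r)
    (hderiv : ∀ w : ℂ, 1 ≤ ‖w‖ → deriv (polyParam d r a) w ≠ 0)
    (h : sphere 0 1 ⊆ polyParam d r a ⁻¹' (polyParam d r a '' {u | 1 < ‖u‖})) :
    polyParam d r a '' {w | 1 ≤ ‖w‖} = univ := by
  have heq : polyParam d r a '' {w | 1 < ‖w‖} = polyParam d r a '' {w | 1 ≤ ‖w‖} := by
    refine (image_mono fun w hw => (show 1 < ‖w‖ from hw).le).antisymm ?_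
    rintro _ ⟨w, hw, rfl⟩
    rcases eq_or_lt_of_le (show 1 ≤ ‖w‖ from hw) with hw1 | hw1
    · exact h (mem_sphere_zero_iff_norm.2 hw1.symm)
    · exact ⟨w, hw1, rfl⟩
  have hopen := isOpen_image_polyParam hderiv isOpen_one_lt_norm subset_rfl
  exact IsClopen.eq_univ ⟨isClosed_image_polyParam hr, heq ▸ hopen⟩ ⟨_, 1, by simp, rfl⟩

theorem isOpen_doublePoints (hderiv : ∀ w : ℂ, 1 ≤ ‖w‖ → deriv (polyParam d r a) w ≠ 0)
    (h : sphere 0 1 ⊆ (doublePoints d r a)ᶜ) : IsOpen (doublePoints d r a) := by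
  have hlt : ∀ w ∈ doublePoints d r a, 1 < ‖w‖ := fun w hw =>
    lt_of_le_of_ne ((mem_doublePoints_iff hderiv).1 hw).1 fun h1 =>
      h (mem_sphere_zero_iff_norm.2 h1.symm) hw
  rw [isOpen_iff_mem_nhds]
  intro w hw
  obtain ⟨hw1, u, hu1, hne, heq⟩ := (mem_doublePoints_iff hderiv).1 hw
  have hu : u ∈ doublePoints d r a :=
    (mem_doublePoints_iff hderiv).2 ⟨hu1, w, hw1, hne.symm, heq.symm⟩
  obtain ⟨N, M, hN, hM, hwN, huM, hNM⟩ := t2_separation hne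
  have himage : polyParam d r a '' (M ∩ {u | 1 < ‖u‖}) ∈ 𝓝 (polyParam d r a w) :=
    (isOpen_image_polyParam hderiv (hM.inter isOpen_one_lt_norm) inter_subset_right).mem_nhds
      ⟨u, ⟨huM, hlt u hu⟩, heq.symm⟩
  have hcont := (differentiableAt_polyParam (r := r) (a := a)
    (ne_zero_of_one_le_norm hw1)).continuousAt
  filter_upwards [hcont himage, (hN.inter isOpen_one_lt_norm).mem_nhds ⟨hwN, hlt w hw⟩]
    with w' ⟨u', ⟨hu'M, hu'⟩, heq'⟩ ⟨hw'N, hw'⟩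
  exact (mem_doublePoints_iff hderiv).2 ⟨le_of_lt hw', u', le_of_lt hu',
    fun h => disjoint_left.1 hNM hw'N (h ▸ hu'M), heq'.symm⟩

theorem injOn_exterior (hr : 0 < r) (hinj : InjOn (polyParam d r a) (sphere 0 1))
    (hderiv : ∀ w : ℂ, 1 ≤ ‖w‖ → deriv (polyParam d r a) w ≠ 0)
    (hne : ∀ w : ℂ, 1 ≤ ‖w‖ → polyParam d r a w ≠ 0) :
    InjOn (polyParam d r a) {w | 1 ≤ ‖w‖} := by
  rcases sphere_subset_preimage_or_disjoint_doublePoints hr hderiv hinj with h | h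
  · obtain ⟨w, hw, hw0⟩ := (image_exterior_eq_univ hr hderiv h).ge (mem_univ 0)
    exact absurd hw0 (hne w hw)
  · have hempty : doublePoints d r a = ∅ :=
      (isClopen_iff.1 ⟨(isCompact_doublePoints hr).isClosed, isOpen_doublePoints hderiv h⟩)
        |>.resolve_right fun huniv => noncompact_univ ℂ (huniv ▸ isCompact_doublePoints hr)
    intro w hw u hu heq
    by_contra hwu
    exact hempty.le ((mem_doublePoints_iff hderiv).2 ⟨hw, u, hu, hwu, heq⟩)

/-- `polyParam d r a` parametrizes a positively oriented Jordan curve around the origin and maps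
the exterior of the unit disc conformally onto the exterior of that curve. -/
structure EncirclesOrigin (d : ℕ) (r : ℝ) (a : Fin (d + 1) → ℂ) : Prop where
  pos : 0 < r
  injOn_sphere : InjOn (polyParam d r a) (sphere 0 1)
  deriv_ne_zero : ∀ w : ℂ, 1 ≤ ‖w‖ → deriv (polyParam d r a) w ≠ 0
  ne_zero : ∀ w : ℂ, 1 ≤ ‖w‖ → polyParam d r a w ≠ 0

theorem EncirclesOrigin.polyParamSlope_ne_zero (h : EncirclesOrigin d r a) {w u : ℂ}
    (hw : 1 ≤ ‖w‖) (hu : 1 ≤ ‖u‖) : polyParamSlope d r a w u ≠ 0 := fun h0 =>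
  have ⟨hne, heq⟩ := (polyParamSlope_eq_zero_iff h.deriv_ne_zero hw hu).1 h0
  hne (injOn_exterior h.pos h.injOn_sphere h.deriv_ne_zero h.ne_zero hw hu heq)

/-! ### Winding numbers and the enclosed domain -/

theorem tendsto_polyParamSlope (u : ℂ) :
    Tendsto (fun w => polyParamSlope d r a w u) (Bornology.cobounded ℂ) (𝓝 r) := by
  have hcont : Continuous fun x : ℂ => r - x * u⁻¹ *
      ∑ j : Fin (d + 1), a j * ∑ i ∈ Finset.range j, x ^ i * u⁻¹ ^ ((j : ℕ) - 1 - i) := by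
    fun_prop
  simpa [polyParamSlope, Function.comp_def] using (hcont.tendsto 0).comp tendsto_inv₀_cobounded

theorem differentiableAt_polyParamSlope {w : ℂ} (hw : w ≠ 0) (u : ℂ) :
    DifferentiableAt ℂ (fun w => polyParamSlope d r a w u) w := by
  unfold polyParamSlope
  fun_prop (disch := assumption)

theorem EncirclesOrigin.circleAverage_mul_deriv_div (h : EncirclesOrigin d r a) {F : ℂ → ℂ}
    {L w : ℂ} (hF : ∀ u : ℂ, 1 ≤ ‖u‖ → DifferentiableAt ℂ F u)
    (hL : Tendsto F (Bornology.cobounded ℂ) (𝓝 L)) (hw : 1 < ‖w‖) :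
    circleAverage (fun u => F u * (u * deriv (polyParam d r a) u /
      (polyParam d r a w - polyParam d r a u))) 0 1 = F w - L := by
  have hw0 := ne_zero_of_one_le_norm hw.le
  have hr0 : (r : ℂ) ≠ 0 := ofReal_ne_zero.2 h.pos.ne'
  set G : ℂ → ℂ := fun u => F u * deriv (polyParam d r a) u / polyParamSlope d r a u w with hG
  have hGdiff : ∀ u : ℂ, 1 ≤ ‖u‖ → DifferentiableAt ℂ G u := fun u hu =>
    ((hF u hu).mul (differentiableAt_deriv_polyParam (ne_zero_of_one_le_norm hu))).div
      (differentiableAt_polyParamSlope (ne_zero_of_one_le_norm hu) w)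
      (h.polyParamSlope_ne_zero hu hw.le)
  have hGlim : Tendsto G (Bornology.cobounded ℂ) (𝓝 L) := by
    have := (hL.mul (tendsto_deriv_polyParam (r := r) (a := a))).div
      (tendsto_polyParamSlope (a := a) w) hr0
    rwa [mul_div_cancel_right₀ _ hr0] at this
  have hGw : G w = F w := by
    rw [hG]
    simp only [polyParamSlope_self hw0]
    exact mul_div_cancel_right₀ _ (h.deriv_ne_zero w hw.le)
  rw [← hGw, ← circleAverage_mul_div_sub hGdiff hGlim hw]
  refine circleAverage_congr_unitSphere fun u hu => ?_
  have hu1 : 1 ≤ ‖u‖ := (mem_sphere_zero_iff_norm.1 hu).ge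
  simp only [hG]
  rw [← neg_sub (polyParam d r a u), polyParam_sub (ne_zero_of_one_le_norm hu1) hw0, ← neg_mul,
    neg_sub, ← div_div]
  ring

/-- The winding number of the curve parametrized by `polyParam d r a` around `ζ`. -/
noncomputable def windingNumber (d : ℕ) (r : ℝ) (a : Fin (d + 1) → ℂ) (ζ : ℂ) : ℂ :=
  circleAverage (fun w => w * deriv (polyParam d r a) w * (polyParam d r a w - ζ)⁻¹) 0 1

/-- The domain enclosed by the curve, as the complement of the image of the closed exterior. -/
def enclosedDomain (d : ℕ) (r : ℝ) (a : Fin (d + 1) → ℂ) : Set ℂ :=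
  (polyParam d r a '' {w | 1 ≤ ‖w‖})ᶜ

theorem isOpen_enclosedDomain (hr : 0 < r) : IsOpen (enclosedDomain d r a) :=
  (isClosed_image_polyParam hr).isOpen_compl

theorem windingNumber_of_mem (hr : 0 < r) {ζ : ℂ} (hζ : ζ ∈ enclosedDomain d r a) :
    windingNumber d r a ζ = 1 := by
  have hr0 : (r : ℂ) ≠ 0 := ofReal_ne_zero.2 hr.ne'
  have hne : ∀ w : ℂ, 1 ≤ ‖w‖ → polyParam d r a w - ζ ≠ 0 := fun w hw h =>
    hζ ⟨w, hw, sub_eq_zero.1 h⟩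
  refine circleAverage_eq_of_tendsto_cobounded (fun w hw => ?_) ?_
  · have hw0 := ne_zero_of_one_le_norm hw
    exact (differentiableAt_id.mul (differentiableAt_deriv_polyParam hw0)).mul
      (((differentiableAt_polyParam hw0).sub_const ζ).inv (hne w hw))
  · have hlim : Tendsto (fun w => deriv (polyParam d r a) w * (polyParam d r a w / w - ζ * w⁻¹)⁻¹)
        (Bornology.cobounded ℂ) (𝓝 (r * (r - ζ * 0)⁻¹)) :=
      tendsto_deriv_polyParam.mul ((tendsto_polyParam_div.sub
        (tendsto_inv₀_cobounded.const_mul ζ)).inv₀ (by simpa using hr0))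
    rw [mul_zero, sub_zero, mul_inv_cancel₀ hr0] at hlim
    refine hlim.congr fun w => ?_
    rw [← div_eq_mul_inv ζ, ← sub_div, inv_div]
    ring

theorem EncirclesOrigin.circleAverage_deriv_div (h : EncirclesOrigin d r a) {w : ℂ}
    (hw : 1 < ‖w‖) : circleAverage (fun u => u * deriv (polyParam d r a) u /
      (polyParam d r a w - polyParam d r a u)) 0 1 = 0 := by
  simpa using h.circleAverage_mul_deriv_div (fun _ _ => differentiableAt_const 1)
    tendsto_const_nhds hw

theorem EncirclesOrigin.windingNumber_apply (h : EncirclesOrigin d r a) {w : ℂ} (hw : 1 < ‖w‖) :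
    windingNumber d r a (polyParam d r a w) = 0 := by
  have heq : ∀ u, u * deriv (polyParam d r a) u * (polyParam d r a u - polyParam d r a w)⁻¹ =
      (-1 : ℂ) • (u * deriv (polyParam d r a) u / (polyParam d r a w - polyParam d r a u)) :=
    fun u => by
      rw [← neg_sub, inv_neg, smul_eq_mul]
      ring
  rw [windingNumber, funext heq, circleAverage_fun_smul, h.circleAverage_deriv_div hw, smul_zero]

theorem EncirclesOrigin.windingNumber_eq_indicator (h : EncirclesOrigin d r a) {ζ : ℂ}
    (hζ : ζ ∉ polyParam d r a '' sphere 0 1) :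
    windingNumber d r a ζ = (enclosedDomain d r a).indicator 1 ζ := by
  by_cases hmem : ζ ∈ enclosedDomain d r a
  · rw [windingNumber_of_mem h.pos hmem, indicator_of_mem hmem, Pi.one_apply]
  · obtain ⟨w, hw, rfl⟩ := not_not.1 hmem
    have hw1 : 1 < ‖w‖ := lt_of_le_of_ne hw fun h1 =>
      hζ (mem_image_of_mem _ (mem_sphere_zero_iff_norm.2 h1.symm))
    rw [h.windingNumber_apply hw1, indicator_of_notMem hmem]

theorem ae_notMem_image_sphere : ∀ᵐ ζ : ℂ, ζ ∉ polyParam d r a '' sphere 0 1 := by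
  refine compl_mem_ae_iff.2 (addHaar_image_eq_zero_of_differentiableOn_of_addHaar_eq_zero volume
    (fun w hw => ?_) (Measure.addHaar_sphere volume 0 1))
  have hw0 : w ≠ 0 := ne_zero_of_one_le_norm (mem_sphere_zero_iff_norm.1 hw).ge
  exact ((differentiableAt_polyParam hw0).restrictScalars ℝ).differentiableWithinAt

theorem continuousOn_mul_deriv_polyParam :
    ContinuousOn (fun w => w * deriv (polyParam d r a) w) (sphere 0 1) :=
  continuousOn_id.mul continuousOn_deriv_polyParam_sphere

theorem EncirclesOrigin.circleAverage_conj_mul_deriv (h : EncirclesOrigin d r a) {ρ : ℝ}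
    (hρ : ∀ w ∈ sphere (0 : ℂ) 1, ‖polyParam d r a w‖ < ρ) :
    π * circleAverage (fun w => (starRingEnd ℂ) (polyParam d r a w) *
      (w * deriv (polyParam d r a) w)) 0 1 =
      (volume.real (ball 0 ρ ∩ enclosedDomain d r a) : ℂ) := by
  have hwinding : ∀ᵐ ζ : ℂ, ζ ∈ ball (0 : ℂ) ρ →
      circleAverage (fun w => w * deriv (polyParam d r a) w * (polyParam d r a w - ζ)⁻¹) 0 1 =
        (enclosedDomain d r a).indicator 1 ζ := by
    filter_upwards [ae_notMem_image_sphere] with ζ hζ _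
    exact h.windingNumber_eq_indicator hζ
  rw [circleAverage_conj_mul continuousOn_polyParam_sphere continuousOn_mul_deriv_polyParam hρ,
    setIntegral_congr_ae measurableSet_ball hwinding,
    setIntegral_indicator (isOpen_enclosedDomain h.pos).measurableSet]
  simp

theorem EncirclesOrigin.ball_subset_enclosedDomain (h : EncirclesOrigin d r a) {ε : ℝ}
    (hε : 0 < ε) (hle : ∀ w ∈ sphere (0 : ℂ) 1, ε ≤ ‖polyParam d r a w‖) :
    ball 0 ε ⊆ enclosedDomain d r a := by
  have hcover : ball 0 ε ⊆ enclosedDomain d r a ∪ polyParam d r a '' {w | 1 < ‖w‖} := by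
    intro ζ hζ
    by_cases hmem : ζ ∈ enclosedDomain d r a
    · exact Or.inl hmem
    · obtain ⟨w, hw, rfl⟩ := not_not.1 hmem
      refine Or.inr (mem_image_of_mem _ (lt_of_le_of_ne (show 1 ≤ ‖w‖ from hw) fun h1 => ?_))
      exact (hle w (mem_sphere_zero_iff_norm.2 h1.symm)).not_gt (mem_ball_zero_iff.1 hζ)
  have hdisj : Disjoint (enclosedDomain d r a) (polyParam d r a '' {w | 1 < ‖w‖}) :=
    disjoint_left.2 fun ζ hζ ⟨w, hw, heq⟩ => hζ ⟨w, (show 1 < ‖w‖ from hw).le, heq⟩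
  exact ((convex_ball (0 : ℂ) ε).isPreconnected.subset_left_of_subset_union
    (isOpen_enclosedDomain h.pos)
    (isOpen_image_polyParam h.deriv_ne_zero isOpen_one_lt_norm subset_rfl) hdisj hcover
    ⟨0, mem_ball_self hε, fun ⟨w, hw, h0⟩ => h.ne_zero w hw h0⟩)

/-! ### The Schwarz function and the moments -/

theorem tendsto_zero_of_circleAverage_eq_zero {g : ℕ → ℂ → ℂ} {c : ℕ → ℂ}
    (hg : ∀ m, ∀ w : ℂ, 1 ≤ ‖w‖ → DifferentiableAt ℂ (g m) w)
    (hc : ∀ m, Tendsto (g m) (Bornology.cobounded ℂ) (𝓝 (c m))) (hc0 : ∀ m, c m ≠ 0)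
    {F : ℂ → ℂ} (hF : ∀ w : ℂ, 1 ≤ ‖w‖ → DifferentiableAt ℂ F w) {n : ℕ}
    (hn : Tendsto (fun w => w⁻¹ ^ n * F w) (Bornology.cobounded ℂ) (𝓝 0))
    (h0 : ∀ m < n, circleAverage (fun w => w⁻¹ ^ m * (g m w * F w)) 0 1 = 0) :
    Tendsto F (Bornology.cobounded ℂ) (𝓝 0) := by
  induction n with
  | zero => simpa using hn
  | succ n ih =>
    refine ih ?_ fun m hm => h0 m (by omega)
    have hlim : Tendsto (fun w => w⁻¹ * (w⁻¹ ^ n * (g n w * F w))) (Bornology.cobounded ℂ)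
        (𝓝 0) := by
      have := (hc n).mul hn
      rw [mul_zero] at this
      exact this.congr fun w => by ring
    have := (tendsto_circleAverage_of_tendsto_inv_mul (fun w hw =>
      ((differentiableAt_inv (ne_zero_of_one_le_norm hw)).fun_pow n).fun_mul
        ((hg n w hw).fun_mul (hF w hw))) hlim).div (hc n) (hc0 n)
    rw [h0 n n.lt_succ_self, zero_div] at this
    refine this.congr' ?_
    filter_upwards [(hc n).eventually_ne (hc0 n)] with w hw
    simp only [Pi.div_apply]
    field_simp

theorem circleAverage_eq_zero_of_tendsto_zero {g F : ℂ → ℂ} {c : ℂ}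
    (hg : ∀ w : ℂ, 1 ≤ ‖w‖ → DifferentiableAt ℂ g w)
    (hc : Tendsto g (Bornology.cobounded ℂ) (𝓝 c))
    (hF : ∀ w : ℂ, 1 ≤ ‖w‖ → DifferentiableAt ℂ F w)
    (h0 : Tendsto F (Bornology.cobounded ℂ) (𝓝 0)) (m : ℕ) :
    circleAverage (fun w => w⁻¹ ^ m * (g w * F w)) 0 1 = 0 := by
  refine circleAverage_eq_of_tendsto_cobounded (fun w hw =>
    ((differentiableAt_inv (ne_zero_of_one_le_norm hw)).pow m).mul ((hg w hw).mul (hF w hw))) ?_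
  simpa using (tendsto_inv₀_cobounded.pow m).mul (hc.mul h0)

/-- The Laurent polynomial agreeing with the complex conjugate of `polyParam d r a` on the unit
circle. -/
noncomputable def polyReflection (d : ℕ) (r : ℝ) (a : Fin (d + 1) → ℂ) (w : ℂ) : ℂ :=
  r * w⁻¹ + ∑ j : Fin (d + 1), (starRingEnd ℂ) (a j) * w ^ (j : ℕ)

theorem polyReflection_eq_conj {w : ℂ} (hw : w ∈ sphere (0 : ℂ) 1) :
    polyReflection d r a w = (starRingEnd ℂ) (polyParam d r a w) := by
  have hconj : (starRingEnd ℂ) w = w⁻¹ := (inv_eq_conj (mem_sphere_zero_iff_norm.1 hw)).symm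
  rw [polyParam_apply]
  simp only [polyReflection, map_add, map_mul, map_sum, map_pow, map_inv₀, conj_ofReal, hconj,
    inv_inv]

/-- The coefficient of `w ^ m` in the Laurent expansion of `f` on the unit circle. -/
noncomputable def laurentCoeff (m : ℕ) (f : ℂ → ℂ) : ℂ :=
  circleAverage (fun w => w⁻¹ ^ m * f w) 0 1

theorem continuousOn_inv_pow_sphere (m : ℕ) :
    ContinuousOn (fun w : ℂ => w⁻¹ ^ m) (sphere 0 1) :=
  (continuousOn_id.inv₀ fun _ hw =>
    ne_zero_of_one_le_norm (mem_sphere_zero_iff_norm.1 hw).ge).pow m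

theorem circleIntegrable_of_continuousOn {f : ℂ → ℂ} (hf : ContinuousOn f (sphere 0 1)) :
    CircleIntegrable f 0 1 :=
  hf.circleIntegrable zero_le_one

theorem circleAverage_const_mul (c : ℂ) (f : ℂ → ℂ) :
    circleAverage (fun w => c * f w) 0 1 = c * circleAverage f 0 1 :=
  circleAverage_fun_smul (a := c) (f := f)

theorem laurentCoeff_sub {f g : ℂ → ℂ} (hf : ContinuousOn f (sphere 0 1))
    (hg : ContinuousOn g (sphere 0 1)) (m : ℕ) :
    laurentCoeff m (fun w => f w - g w) = laurentCoeff m f - laurentCoeff m g := by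
  simp only [laurentCoeff, mul_sub]
  exact circleAverage_fun_sub
    (circleIntegrable_of_continuousOn ((continuousOn_inv_pow_sphere m).mul hf))
    (circleIntegrable_of_continuousOn ((continuousOn_inv_pow_sphere m).mul hg))

theorem laurentCoeff_const_mul (c : ℂ) (f : ℂ → ℂ) (m : ℕ) :
    laurentCoeff m (fun w => c * f w) = c * laurentCoeff m f := by
  simp only [laurentCoeff, mul_left_comm _ c, circleAverage_const_mul]

theorem laurentCoeff_const (m : ℕ) (c : ℂ) :
    laurentCoeff m (fun _ => c) = if m = 0 then c else 0 := by
  have hzpow := circleAverage_zpow (-m)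
  simp only [zpow_neg, zpow_natCast, ← inv_pow, neg_eq_zero, Nat.cast_eq_zero] at hzpow
  simp only [laurentCoeff, mul_comm _ c, circleAverage_const_mul, hzpow, mul_ite, mul_one, mul_zero]

theorem norm_laurentCoeff_le {f : ℂ → ℂ} {C : ℝ} (hf : ∀ w ∈ sphere (0 : ℂ) 1, ‖f w‖ ≤ C)
    (m : ℕ) : ‖laurentCoeff m f‖ ≤ C :=
  norm_circleAverage_le fun w hw => by
    rw [norm_mul, norm_pow, norm_inv, mem_sphere_zero_iff_norm.1 hw, inv_one, one_pow, one_mul]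
    exact hf w hw

theorem continuousOn_zpow_sphere (n : ℤ) : ContinuousOn (fun w : ℂ => w ^ n) (sphere 0 1) :=
  continuousOn_id.zpow₀ n fun _ hw =>
    Or.inl (ne_zero_of_one_le_norm (mem_sphere_zero_iff_norm.1 hw).ge)

theorem circleAverage_zpow_mul_add_sum {ι : Type*} (s : Finset ι) (c : ℂ) (n : ℤ) (b : ι → ℂ)
    (k : ι → ℤ) (m : ℤ) :
    circleAverage (fun w => w ^ m * (c * w ^ n + ∑ j ∈ s, b j * w ^ k j)) 0 1 =
      (if m + n = 0 then c else 0) + ∑ j ∈ s, if m + k j = 0 then b j else 0 := by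
  have hint : ∀ (l : ℤ) (e : ℂ), CircleIntegrable (fun w => e * w ^ l) 0 1 := fun l e =>
    circleIntegrable_of_continuousOn (continuousOn_const.mul (continuousOn_zpow_sphere l))
  have hmono : ∀ (l : ℤ) (e : ℂ),
      circleAverage (fun w => e * w ^ l) 0 1 = if l = 0 then e else 0 := fun l e => by
    rw [circleAverage_const_mul, circleAverage_zpow, mul_ite, mul_one, mul_zero]
  have hshift : ∀ w ∈ sphere (0 : ℂ) 1, w ^ m * (c * w ^ n + ∑ j ∈ s, b j * w ^ k j) =
      c * w ^ (m + n) + ∑ j ∈ s, b j * w ^ (m + k j) := fun w hw => by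
    have hw0 : w ≠ 0 := ne_zero_of_one_le_norm (mem_sphere_zero_iff_norm.1 hw).ge
    simp only [zpow_add₀ hw0, mul_add, Finset.mul_sum, mul_left_comm]
  rw [circleAverage_congr_unitSphere hshift,
    circleAverage_fun_add (hint _ _) (CircleIntegrable.fun_sum s fun j _ => hint (m + k j) (b j)),
    circleAverage_fun_sum fun j _ => hint (m + k j) (b j), hmono]
  exact congrArg _ (Finset.sum_congr rfl fun j _ => hmono (m + k j) (b j))

theorem laurentCoeff_eq_circleAverage_zpow (m : ℕ) (f : ℂ → ℂ) :
    laurentCoeff m f = circleAverage (fun w => w ^ (-(m : ℤ)) * f w) 0 1 := by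
  simp only [laurentCoeff, zpow_neg, zpow_natCast, inv_pow]

theorem laurentCoeff_polyReflection (j : Fin (d + 1)) :
    laurentCoeff j (polyReflection d r a) = (starRingEnd ℂ) (a j) := by
  have h := circleAverage_zpow_mul_add_sum Finset.univ (r : ℂ) (-1)
    (fun i : Fin (d + 1) => (starRingEnd ℂ) (a i)) (fun i => (i : ℕ)) (-(j : ℕ))
  have hne : (-((j : ℕ) : ℤ)) + -1 ≠ 0 := by omega
  have hiff : ∀ i : Fin (d + 1), -((j : ℕ) : ℤ) + (i : ℕ) = 0 ↔ i = j := fun i => by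
    rw [← Fin.val_inj]
    omega
  simpa [laurentCoeff_eq_circleAverage_zpow, polyReflection, hne, hiff] using h

theorem laurentCoeff_polyParam (m : ℕ) :
    laurentCoeff m (polyParam d r a) =
      (if m = 1 then (r : ℂ) else 0) + if m = 0 then a 0 else 0 := by
  have h := circleAverage_zpow_mul_add_sum Finset.univ (r : ℂ) 1 a
    (fun i : Fin (d + 1) => -((i : ℕ) : ℤ)) (-m)
  have hone : -(m : ℤ) + 1 = 0 ↔ m = 1 := by omega
  have hiff : ∀ i : Fin (d + 1), (-(m : ℤ) + -((i : ℕ) : ℤ) = 0) ↔ (i = 0 ∧ m = 0) := fun i => by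
    rw [← Fin.val_inj, Fin.val_zero]
    omega
  simp only [zpow_one, hone, hiff] at h
  rw [laurentCoeff_eq_circleAverage_zpow, show polyParam d r a = fun w => (r : ℂ) * w +
    ∑ j : Fin (d + 1), a j * w ^ (-((j : ℕ) : ℤ)) from rfl, h]
  by_cases hm : m = 0 <;> simp [hm]

/-- The defect `S - P` between the Schwarz function `S` of the curve and a polynomial `P`, read in
the parameter `w`. -/
noncomputable def schwarzRemainder (d : ℕ) (r : ℝ) (a : Fin (d + 1) → ℂ) (P : Polynomial ℂ)
    (w : ℂ) : ℂ :=
  polyReflection d r a w - P.eval (polyParam d r a w)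

variable {P : Polynomial ℂ}

theorem differentiableAt_polyReflection {w : ℂ} (hw : w ≠ 0) :
    DifferentiableAt ℂ (polyReflection d r a) w := by
  unfold polyReflection
  fun_prop (disch := assumption)

theorem differentiableAt_eval_polyParam {w : ℂ} (hw : w ≠ 0) :
    DifferentiableAt ℂ (fun w => P.eval (polyParam d r a w)) w :=
  P.differentiable.differentiableAt.comp w (differentiableAt_polyParam hw)

theorem differentiableAt_schwarzRemainder {w : ℂ} (hw : w ≠ 0) :
    DifferentiableAt ℂ (schwarzRemainder d r a P) w :=
  (differentiableAt_polyReflection hw).sub (differentiableAt_eval_polyParam hw)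

theorem tendsto_inv_pow_mul_polyReflection :
    Tendsto (fun w => w⁻¹ ^ (d + 1) * polyReflection d r a w) (Bornology.cobounded ℂ) (𝓝 0) := by
  have hlim := ((tendsto_inv₀_cobounded.pow (d + 2)).const_mul (r : ℂ)).add
    (tendsto_finsetSum Finset.univ fun (j : Fin (d + 1)) _ =>
      (tendsto_inv₀_cobounded.pow (d + 1 - (j : ℕ))).const_mul ((starRingEnd ℂ) (a j)))
  have hpos : ∀ j : Fin (d + 1), d + 1 - (j : ℕ) ≠ 0 := fun j => by omega
  simp only [zero_pow (Nat.succ_ne_zero _), zero_pow (hpos _), mul_zero, Finset.sum_const_zero,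
    add_zero] at hlim
  refine hlim.congr' ?_
  filter_upwards [Bornology.eventually_ne_cobounded 0] with w hw
  rw [polyReflection, mul_add, Finset.mul_sum]
  congr 1
  · ring
  · refine Finset.sum_congr rfl fun j _ => ?_
    rw [inv_pow, inv_pow, pow_sub₀ w hw j.is_lt.le]
    field_simp

theorem tendsto_inv_pow_mul_eval_polyParam (hP : P.natDegree ≤ d) :
    Tendsto (fun w => w⁻¹ ^ (d + 1) * P.eval (polyParam d r a w)) (Bornology.cobounded ℂ)
      (𝓝 0) := by
  have hlim := tendsto_finsetSum (Finset.range (d + 1)) fun i _ =>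
    ((tendsto_inv₀_cobounded.pow (d + 1 - i)).mul
      ((tendsto_polyParam_div (r := r) (a := a)).pow i)).const_mul (P.coeff i)
  rw [Finset.sum_eq_zero fun i hi => by
    rw [zero_pow (by have := Finset.mem_range.1 hi; omega), zero_mul, mul_zero]] at hlim
  refine hlim.congr' ?_
  filter_upwards [Bornology.eventually_ne_cobounded 0] with w hw
  rw [Polynomial.eval_eq_sum_range' (Nat.lt_succ_of_le hP), Finset.mul_sum]
  refine Finset.sum_congr rfl fun i hi => ?_
  rw [inv_pow, inv_pow, pow_sub₀ w hw (Finset.mem_range.1 hi).le, div_pow]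
  field_simp

theorem tendsto_inv_pow_mul_schwarzRemainder (hP : P.natDegree ≤ d) :
    Tendsto (fun w => w⁻¹ ^ (d + 1) * schwarzRemainder d r a P w) (Bornology.cobounded ℂ)
      (𝓝 0) := by
  simpa [schwarzRemainder, mul_sub] using
    tendsto_inv_pow_mul_polyReflection.sub (tendsto_inv_pow_mul_eval_polyParam hP)

theorem continuousOn_eval_polyParam_sphere :
    ContinuousOn (fun w => P.eval (polyParam d r a w)) (sphere 0 1) :=
  P.continuous.comp_continuousOn continuousOn_polyParam_sphere

theorem laurentCoeff_schwarzRemainder (j : Fin (d + 1)) :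
    laurentCoeff j (schwarzRemainder d r a P) =
      (starRingEnd ℂ) (a j) - laurentCoeff j fun w => P.eval (polyParam d r a w) := by
  have hrefl : ContinuousOn (polyReflection d r a) (sphere 0 1) := fun w hw =>
    (differentiableAt_polyReflection (ne_zero_of_one_le_norm
      (mem_sphere_zero_iff_norm.1 hw).ge)).continuousAt.continuousWithinAt
  rw [← laurentCoeff_polyReflection (r := r)]
  exact laurentCoeff_sub hrefl continuousOn_eval_polyParam_sphere j

theorem tendsto_schwarzRemainder_iff_laurentCoeff (hP : P.natDegree ≤ d) :
    Tendsto (schwarzRemainder d r a P) (Bornology.cobounded ℂ) (𝓝 0) ↔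
      ∀ j : Fin (d + 1),
        (starRingEnd ℂ) (a j) = laurentCoeff j fun w => P.eval (polyParam d r a w) := by
  have hdiff : ∀ w : ℂ, 1 ≤ ‖w‖ → DifferentiableAt ℂ (schwarzRemainder d r a P) w := fun w hw =>
    differentiableAt_schwarzRemainder (ne_zero_of_one_le_norm hw)
  simp only [← sub_eq_zero (a := (starRingEnd ℂ) _), ← laurentCoeff_schwarzRemainder (r := r)]
  constructor
  · intro h j
    simpa [laurentCoeff] using circleAverage_eq_zero_of_tendsto_zero (g := fun _ => 1)
      (fun _ _ => differentiableAt_const _) tendsto_const_nhds hdiff h j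
  · intro h
    refine tendsto_zero_of_circleAverage_eq_zero (g := fun _ _ => 1) (c := fun _ => 1)
      (fun _ _ _ => differentiableAt_const _) (fun _ => tendsto_const_nhds)
      (fun _ => one_ne_zero) hdiff (tendsto_inv_pow_mul_schwarzRemainder hP) fun m hm => ?_
    simpa [laurentCoeff] using h ⟨m, hm⟩

theorem encArea_polyParam :
    encArea (polyParam d r a) = π * circleAverage (fun w => (starRingEnd ℂ) (polyParam d r a w) *
      (w * deriv (polyParam d r a) w)) 0 1 := by
  simp only [mul_left_comm _ (_ : ℂ) (deriv _ _)]
  rw [circleAverage_mul_eq_circleIntegral, encArea, ← mul_assoc]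
  congr 1
  field_simp

theorem mul_deriv_polyParam {w : ℂ} (hw : w ≠ 0) : w * deriv (polyParam d r a) w =
    r * w ^ (1 : ℤ) + ∑ j : Fin (d + 1), -((j : ℕ) * a j) * w ^ (-((j : ℕ) : ℤ)) := by
  rw [(hasDerivAt_polyParam hw).deriv, mul_sub, Finset.mul_sum, sub_eq_add_neg,
    ← Finset.sum_neg_distrib]
  congr 1
  · rw [zpow_one, mul_comm]
  · refine Finset.sum_congr rfl fun j _ => ?_
    rw [zpow_neg, zpow_natCast, pow_succ, inv_pow]
    field_simp

theorem circleAverage_conj_mul_deriv_polyParam :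
    circleAverage (fun w => (starRingEnd ℂ) (polyParam d r a w) *
      (w * deriv (polyParam d r a) w)) 0 1 =
      ((r ^ 2 - ∑ j : Fin (d + 1), (j : ℕ) * ‖a j‖ ^ 2 : ℝ) : ℂ) := by
  set g : ℂ → ℂ := fun w =>
    r * w ^ (1 : ℤ) + ∑ j : Fin (d + 1), -((j : ℕ) * a j) * w ^ (-((j : ℕ) : ℤ)) with hg
  have hgcont : ContinuousOn g (sphere 0 1) :=
    (continuousOn_const.mul (continuousOn_zpow_sphere 1)).add
      (continuousOn_finsetSum _ fun j _ => continuousOn_const.mul (continuousOn_zpow_sphere _))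
  have hsplit : ∀ w ∈ sphere (0 : ℂ) 1, (starRingEnd ℂ) (polyParam d r a w) *
      (w * deriv (polyParam d r a) w) = r * (w ^ (-1 : ℤ) * g w) +
        ∑ j : Fin (d + 1), (starRingEnd ℂ) (a j) * (w ^ ((j : ℕ) : ℤ) * g w) := fun w hw => by
    rw [mul_deriv_polyParam (ne_zero_of_one_le_norm (mem_sphere_zero_iff_norm.1 hw).ge),
      ← polyReflection_eq_conj hw, polyReflection, add_mul, Finset.sum_mul]
    simp only [hg, zpow_neg_one, zpow_natCast, mul_assoc]
  have hint : ∀ (c : ℂ) (n : ℤ), CircleIntegrable (fun w => c * (w ^ n * g w)) 0 1 := fun c n =>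
    circleIntegrable_of_continuousOn
      (continuousOn_const.mul ((continuousOn_zpow_sphere n).mul hgcont))
  have hone : ∀ i : Fin (d + 1), (-1 : ℤ) + -((i : ℕ) : ℤ) ≠ 0 := fun i => by omega
  have hiff : ∀ i j : Fin (d + 1), ((j : ℕ) : ℤ) + -((i : ℕ) : ℤ) = 0 ↔ i = j := fun i j => by
    rw [← Fin.val_inj]
    omega
  have hpos : ∀ j : Fin (d + 1), ((j : ℕ) : ℤ) + 1 ≠ 0 := fun j => by omega
  have hnorm : ∀ z : ℂ, (starRingEnd ℂ) z * z = (‖z‖ : ℂ) * ‖z‖ := fun z => by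
    rw [mul_comm, mul_conj', sq]
  rw [circleAverage_congr_unitSphere hsplit, circleAverage_fun_add (hint _ _)
    (CircleIntegrable.fun_sum _ fun j _ => hint _ _), circleAverage_fun_sum fun j _ => hint _ _]
  simp only [circleAverage_const_mul, hg, circleAverage_zpow_mul_add_sum, hone, hiff, hpos]
  simp [sq, sub_eq_add_neg, mul_left_comm, hnorm]

theorem encArea_polyParam_eq :
    encArea (polyParam d r a) =
      ((π * (r ^ 2 - ∑ j : Fin (d + 1), (j : ℕ) * ‖a j‖ ^ 2) : ℝ) : ℂ) := by
  rw [encArea_polyParam, circleAverage_conj_mul_deriv_polyParam, ofReal_mul]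

theorem mul_extMoment_polyParam {k : ℕ} (hk : k ≠ 0) :
    k * extMoment (polyParam d r a) k =
      circleAverage (fun w => (starRingEnd ℂ) (polyParam d r a w) *
        ((polyParam d r a w)⁻¹ ^ k * (w * deriv (polyParam d r a) w))) 0 1 := by
  have hk0 : (k : ℂ) ≠ 0 := Nat.cast_ne_zero.2 hk
  have hcomm : ∀ w, (starRingEnd ℂ) (polyParam d r a w) *
      ((polyParam d r a w)⁻¹ ^ k * (w * deriv (polyParam d r a) w)) =
      w * ((starRingEnd ℂ) (polyParam d r a w) * polyParam d r a w ^ (-(k : ℤ)) *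
        deriv (polyParam d r a) w) := fun w => by
    rw [zpow_neg, zpow_natCast, inv_pow]
    ring
  rw [funext hcomm, circleAverage_mul_eq_circleIntegral, extMoment, ← mul_assoc]
  congr 1
  field_simp

theorem circleAverage_zpow_mul_deriv_polyParam (hr : 0 < r)
    (hne : ∀ w : ℂ, 1 ≤ ‖w‖ → polyParam d r a w ≠ 0) (n : ℤ) :
    circleAverage (fun w => w * (polyParam d r a w ^ n * deriv (polyParam d r a) w)) 0 1 =
      if n = -1 then 1 else 0 := by
  split_ifs with hn
  · have hmem : (0 : ℂ) ∈ enclosedDomain d r a := fun ⟨w, hw, h0⟩ => hne w hw h0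
    rw [← windingNumber_of_mem hr hmem, windingNumber, hn]
    congr 1 with w
    rw [zpow_neg_one, sub_zero]
    ring
  · have hsphere : ∀ w ∈ sphere (0 : ℂ) 1, 1 ≤ ‖w‖ := fun w hw =>
      (mem_sphere_zero_iff_norm.1 hw).ge
    exact circleAverage_mul_zpow_mul_eq_zero (fun w hw => (differentiableAt_polyParam
      (ne_zero_of_one_le_norm (hsphere w hw))).hasDerivAt) (fun w hw => hne w (hsphere w hw)) hn

theorem continuousOn_inv_polyParam_pow_mul (hne : ∀ w : ℂ, 1 ≤ ‖w‖ → polyParam d r a w ≠ 0)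
    (k : ℕ) : ContinuousOn (fun w => (polyParam d r a w)⁻¹ ^ k * (w * deriv (polyParam d r a) w))
      (sphere 0 1) :=
  ((continuousOn_polyParam_sphere.inv₀ fun w hw =>
    hne w (mem_sphere_zero_iff_norm.1 hw).ge).pow k).mul continuousOn_mul_deriv_polyParam

theorem circleAverage_eval_mul_inv_pow (hr : 0 < r)
    (hne : ∀ w : ℂ, 1 ≤ ‖w‖ → polyParam d r a w ≠ 0) (m : ℕ) :
    circleAverage (fun w => P.eval (polyParam d r a w) *
      ((polyParam d r a w)⁻¹ ^ (m + 1) * (w * deriv (polyParam d r a) w))) 0 1 = P.coeff m := by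
  set h := polyParam d r a with hh
  have hexpand : ∀ w ∈ sphere (0 : ℂ) 1, P.eval (h w) * ((h w)⁻¹ ^ (m + 1) * (w * deriv h w)) =
      ∑ i ∈ P.support, P.coeff i * (w * (h w ^ ((i : ℤ) - (m + 1 : ℕ)) * deriv h w)) :=
    fun w hw => by
      have h0 : h w ≠ 0 := hne w (mem_sphere_zero_iff_norm.1 hw).ge
      rw [Polynomial.eval_eq_sum, Polynomial.sum, Finset.sum_mul]
      refine Finset.sum_congr rfl fun i _ => ?_
      rw [zpow_sub₀ h0, zpow_natCast, zpow_natCast, inv_pow]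
      ring
  have hint : ∀ i ∈ P.support, CircleIntegrable
      (fun w => P.coeff i * (w * (h w ^ ((i : ℤ) - (m + 1 : ℕ)) * deriv h w))) 0 1 := fun i _ =>
    circleIntegrable_of_continuousOn <| continuousOn_const.mul <| continuousOn_id.mul <|
      (continuousOn_polyParam_sphere.zpow₀ _ fun w hw =>
        Or.inl (hne w (mem_sphere_zero_iff_norm.1 hw).ge)).mul continuousOn_deriv_polyParam_sphere
  have hterm : ∀ i ∈ P.support, circleAverage
      (fun w => P.coeff i * (w * (h w ^ ((i : ℤ) - (m + 1 : ℕ)) * deriv h w))) 0 1 =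
      if i = m then P.coeff i else 0 := fun i _ => by
    have hiff : (i : ℤ) - (m + 1 : ℕ) = -1 ↔ i = m := by omega
    rw [circleAverage_const_mul, hh, circleAverage_zpow_mul_deriv_polyParam hr hne]
    simp only [hiff, mul_ite, mul_one, mul_zero]
  rw [circleAverage_congr_unitSphere hexpand, circleAverage_fun_sum hint,
    Finset.sum_congr rfl hterm, Finset.sum_ite_eq']
  simp only [Polynomial.mem_support_iff, ne_eq, ite_not, ite_eq_right_iff]
  exact Eq.symm

theorem circleAverage_momentKernel_mul_schwarzRemainder (hr : 0 < r)
    (hne : ∀ w : ℂ, 1 ≤ ‖w‖ → polyParam d r a w ≠ 0) (m : ℕ) :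
    circleAverage (fun w => w⁻¹ ^ m * ((w / polyParam d r a w) ^ (m + 1) *
      deriv (polyParam d r a) w * schwarzRemainder d r a P w)) 0 1 =
      (m + 1 : ℕ) * extMoment (polyParam d r a) (m + 1) - P.coeff m := by
  have hsplit : ∀ w ∈ sphere (0 : ℂ) 1, w⁻¹ ^ m * ((w / polyParam d r a w) ^ (m + 1) *
      deriv (polyParam d r a) w * schwarzRemainder d r a P w) =
      (starRingEnd ℂ) (polyParam d r a w) *
        ((polyParam d r a w)⁻¹ ^ (m + 1) * (w * deriv (polyParam d r a) w)) -
      P.eval (polyParam d r a w) *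
        ((polyParam d r a w)⁻¹ ^ (m + 1) * (w * deriv (polyParam d r a) w)) := fun w hw => by
    have hw0 : w ≠ 0 := ne_zero_of_one_le_norm (mem_sphere_zero_iff_norm.1 hw).ge
    rw [schwarzRemainder, polyReflection_eq_conj hw, ← sub_mul, div_eq_mul_inv, mul_pow, pow_succ w,
      inv_pow w]
    field_simp
  have hcont := continuousOn_inv_polyParam_pow_mul hne (m + 1)
  rw [circleAverage_congr_unitSphere hsplit, ← circleAverage_eval_mul_inv_pow hr hne,
    mul_extMoment_polyParam m.succ_ne_zero]
  exact circleAverage_fun_sub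
    (circleIntegrable_of_continuousOn
      ((continuous_conj.comp_continuousOn continuousOn_polyParam_sphere).mul hcont))
    (circleIntegrable_of_continuousOn (continuousOn_eval_polyParam_sphere.mul hcont))

-- `S - P` vanishes at infinity iff all its residues at infinity against `h ^ (-m-1) dh` vanish.
theorem tendsto_schwarzRemainder_iff_extMoment (hr : 0 < r)
    (hne : ∀ w : ℂ, 1 ≤ ‖w‖ → polyParam d r a w ≠ 0) (hP : P.natDegree ≤ d) :
    Tendsto (schwarzRemainder d r a P) (Bornology.cobounded ℂ) (𝓝 0) ↔
      ∀ m : ℕ, (m + 1 : ℕ) * extMoment (polyParam d r a) (m + 1) = P.coeff m := by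
  have hr0 : (r : ℂ) ≠ 0 := ofReal_ne_zero.2 hr.ne'
  have hdiff : ∀ w : ℂ, 1 ≤ ‖w‖ → DifferentiableAt ℂ (schwarzRemainder d r a P) w := fun w hw =>
    differentiableAt_schwarzRemainder (ne_zero_of_one_le_norm hw)
  have hg : ∀ (m : ℕ) (w : ℂ), 1 ≤ ‖w‖ → DifferentiableAt ℂ (fun w =>
      (w / polyParam d r a w) ^ (m + 1) * deriv (polyParam d r a) w) w := fun m w hw =>
    ((differentiableAt_id.div (differentiableAt_polyParam (ne_zero_of_one_le_norm hw))
      (hne w hw)).pow _).mul (differentiableAt_deriv_polyParam (ne_zero_of_one_le_norm hw))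
  have hc : ∀ m : ℕ, Tendsto (fun w => (w / polyParam d r a w) ^ (m + 1) *
      deriv (polyParam d r a) w) (Bornology.cobounded ℂ) (𝓝 ((r : ℂ)⁻¹ ^ (m + 1) * r)) :=
    fun m => by
      have := (((tendsto_polyParam_div (a := a)).inv₀ hr0).pow (m + 1)).mul
        (tendsto_deriv_polyParam (r := r) (a := a))
      simpa only [inv_div] using this
  simp only [← sub_eq_zero (b := P.coeff _),
    ← circleAverage_momentKernel_mul_schwarzRemainder hr hne]
  exact ⟨fun h m => circleAverage_eq_zero_of_tendsto_zero (hg m) (hc m) hdiff h m, fun h =>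
    tendsto_zero_of_circleAverage_eq_zero hg hc
      (fun m => mul_ne_zero (pow_ne_zero _ (inv_ne_zero hr0)) hr0) hdiff
      (tendsto_inv_pow_mul_schwarzRemainder hP) fun m _ => h m⟩

/-! ### The Schwarz remainder as a Cauchy transform -/

theorem EncirclesOrigin.polyParam_ne_of_one_lt (h : EncirclesOrigin d r a) {w u : ℂ}
    (hw : 1 < ‖w‖) (hu : u ∈ sphere (0 : ℂ) 1) : polyParam d r a w - polyParam d r a u ≠ 0 :=
  fun heq => by
    have hu1 := mem_sphere_zero_iff_norm.1 hu
    have : w = u := injOn_exterior h.pos h.injOn_sphere h.deriv_ne_zero h.ne_zero hw.le hu1.ge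
      (sub_eq_zero.1 heq)
    exact hw.ne' (this ▸ hu1)

theorem EncirclesOrigin.continuousOn_deriv_div (h : EncirclesOrigin d r a) {w : ℂ}
    (hw : 1 < ‖w‖) : ContinuousOn (fun u => u * deriv (polyParam d r a) u /
      (polyParam d r a w - polyParam d r a u)) (sphere 0 1) :=
  continuousOn_mul_deriv_polyParam.div (continuousOn_const.sub continuousOn_polyParam_sphere)
    fun _ hu => h.polyParam_ne_of_one_lt hw hu

theorem EncirclesOrigin.circleAverage_eval_mul_deriv (h : EncirclesOrigin d r a) :
    circleAverage (fun u => P.eval (polyParam d r a u) * (u * deriv (polyParam d r a) u)) 0 1 =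
      0 := by
  have heq : ∀ u ∈ sphere (0 : ℂ) 1,
      P.eval (polyParam d r a u) * (u * deriv (polyParam d r a) u) =
      (Polynomial.X * P).eval (polyParam d r a u) *
        ((polyParam d r a u)⁻¹ ^ (0 + 1) * (u * deriv (polyParam d r a) u)) := fun u hu => by
    have := h.ne_zero u (mem_sphere_zero_iff_norm.1 hu).ge
    rw [Polynomial.eval_mul, Polynomial.eval_X, zero_add, pow_one]
    field_simp
  rw [circleAverage_congr_unitSphere heq, circleAverage_eval_mul_inv_pow h.pos h.ne_zero,
    Polynomial.mul_coeff_zero, Polynomial.coeff_X_zero, zero_mul]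

theorem EncirclesOrigin.circleAverage_eval_mul_deriv_div (h : EncirclesOrigin d r a) {w : ℂ}
    (hw : 1 < ‖w‖) : circleAverage (fun u => P.eval (polyParam d r a u) *
      (u * deriv (polyParam d r a) u / (polyParam d r a w - polyParam d r a u))) 0 1 = 0 := by
  obtain ⟨Q, hQ⟩ := Polynomial.X_sub_C_dvd_sub_C_eval (p := P) (a := polyParam d r a w)
  have heq : ∀ u ∈ sphere (0 : ℂ) 1, P.eval (polyParam d r a u) *
      (u * deriv (polyParam d r a) u / (polyParam d r a w - polyParam d r a u)) =
      P.eval (polyParam d r a w) *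
          (u * deriv (polyParam d r a) u / (polyParam d r a w - polyParam d r a u)) -
        Q.eval (polyParam d r a u) * (u * deriv (polyParam d r a) u) := fun u hu => by
    have hne := h.polyParam_ne_of_one_lt hw hu
    have hdiv := congrArg (Polynomial.eval (polyParam d r a u)) hQ
    simp only [Polynomial.eval_sub, Polynomial.eval_mul, Polynomial.eval_X,
      Polynomial.eval_C] at hdiv
    rw [sub_eq_iff_eq_add.1 hdiv]
    field_simp
    ring
  rw [circleAverage_congr_unitSphere heq, circleAverage_fun_sub
    (circleIntegrable_of_continuousOn (continuousOn_const.fun_mul (h.continuousOn_deriv_div hw)))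
    (circleIntegrable_of_continuousOn
      (continuousOn_eval_polyParam_sphere.fun_mul continuousOn_mul_deriv_polyParam)),
    circleAverage_const_mul, h.circleAverage_deriv_div hw, h.circleAverage_eval_mul_deriv,
    mul_zero, sub_zero]

theorem EncirclesOrigin.circleAverage_deriv_div_mul_inv (h : EncirclesOrigin d r a) {w ζ : ℂ}
    (hw : 1 < ‖w‖) (hζ : ζ ∉ polyParam d r a '' sphere 0 1) (hne : ζ ≠ polyParam d r a w) :
    circleAverage (fun u => u * deriv (polyParam d r a) u /
      (polyParam d r a w - polyParam d r a u) * (polyParam d r a u - ζ)⁻¹) 0 1 =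
      (enclosedDomain d r a).indicator (fun ζ => (polyParam d r a w - ζ)⁻¹) ζ := by
  have hcurve : ∀ u ∈ sphere (0 : ℂ) 1, polyParam d r a u - ζ ≠ 0 := fun u hu h0 =>
    hζ ⟨u, hu, sub_eq_zero.1 h0⟩
  have hsplit : ∀ u ∈ sphere (0 : ℂ) 1, u * deriv (polyParam d r a) u /
      (polyParam d r a w - polyParam d r a u) * (polyParam d r a u - ζ)⁻¹ =
      (polyParam d r a w - ζ)⁻¹ * (u * deriv (polyParam d r a) u * (polyParam d r a u - ζ)⁻¹ +
        u * deriv (polyParam d r a) u / (polyParam d r a w - polyParam d r a u)) := fun u hu => by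
    have h1 := hcurve u hu
    have h2 := h.polyParam_ne_of_one_lt hw hu
    have h3 : polyParam d r a w - ζ ≠ 0 := sub_ne_zero.2 hne.symm
    field_simp
    ring
  have hwinding := h.windingNumber_eq_indicator hζ
  rw [windingNumber] at hwinding
  rw [circleAverage_congr_unitSphere hsplit, circleAverage_const_mul, circleAverage_fun_add
    (circleIntegrable_of_continuousOn (continuousOn_mul_deriv_polyParam.fun_mul
      ((continuousOn_polyParam_sphere.fun_sub continuousOn_const).fun_inv₀ hcurve)))
    (circleIntegrable_of_continuousOn (h.continuousOn_deriv_div hw)),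
    h.circleAverage_deriv_div hw, add_zero, hwinding]
  by_cases hmem : ζ ∈ enclosedDomain d r a <;> simp [hmem]

theorem EncirclesOrigin.schwarzRemainder_eq_integral (h : EncirclesOrigin d r a)
    (hlim : Tendsto (schwarzRemainder d r a P) (Bornology.cobounded ℂ) (𝓝 0)) {ρ : ℝ}
    (hρ : ∀ w ∈ sphere (0 : ℂ) 1, ‖polyParam d r a w‖ < ρ) {w : ℂ} (hw : 1 < ‖w‖) :
    π * schwarzRemainder d r a P w =
      ∫ ζ in ball 0 ρ ∩ enclosedDomain d r a, (polyParam d r a w - ζ)⁻¹ := by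
  set φ : ℂ → ℂ := fun u =>
    u * deriv (polyParam d r a) u / (polyParam d r a w - polyParam d r a u)
  have hφcont : ContinuousOn φ (sphere 0 1) := h.continuousOn_deriv_div hw
  have hsplit : ∀ u ∈ sphere (0 : ℂ) 1, schwarzRemainder d r a P u * φ u =
      (starRingEnd ℂ) (polyParam d r a u) * φ u - P.eval (polyParam d r a u) * φ u :=
    fun u hu => by rw [schwarzRemainder, polyReflection_eq_conj hu, sub_mul]
  have hconj : CircleIntegrable (fun u => (starRingEnd ℂ) (polyParam d r a u) * φ u) 0 1 :=
    circleIntegrable_of_continuousOn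
      ((continuous_conj.comp_continuousOn continuousOn_polyParam_sphere).mul hφcont)
  have hCauchy : schwarzRemainder d r a P w =
      circleAverage (fun u => (starRingEnd ℂ) (polyParam d r a u) * φ u) 0 1 := by
    rw [← sub_zero (schwarzRemainder d r a P w), ← h.circleAverage_mul_deriv_div (fun u hu =>
      differentiableAt_schwarzRemainder (ne_zero_of_one_le_norm hu)) hlim hw,
      circleAverage_congr_unitSphere hsplit, circleAverage_fun_sub hconj
      (circleIntegrable_of_continuousOn (continuousOn_eval_polyParam_sphere.fun_mul hφcont)),
      h.circleAverage_eval_mul_deriv_div hw, sub_zero]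
  have hae : ∀ᵐ ζ : ℂ, ζ ∈ ball (0 : ℂ) ρ →
      circleAverage (fun u => φ u * (polyParam d r a u - ζ)⁻¹) 0 1 =
        (enclosedDomain d r a).indicator (fun ζ => (polyParam d r a w - ζ)⁻¹) ζ := by
    filter_upwards [ae_notMem_image_sphere, Measure.ae_ne volume (polyParam d r a w)]
      with ζ hζ hne _
    exact h.circleAverage_deriv_div_mul_inv hw hζ hne
  rw [hCauchy, circleAverage_conj_mul continuousOn_polyParam_sphere hφcont hρ,
    setIntegral_congr_ae measurableSet_ball hae,
    setIntegral_indicator (isOpen_enclosedDomain h.pos).measurableSet]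

theorem exists_norm_polyParam_lt_of_sphere (z : ℂ) :
    ∃ ρ, ‖z‖ ≤ ρ ∧ ∀ w ∈ sphere (0 : ℂ) 1, ‖polyParam d r a w‖ < ρ := by
  obtain ⟨C, hC⟩ := (isCompact_sphere (0 : ℂ) 1).exists_bound_of_continuousOn
    (continuousOn_polyParam_sphere (d := d) (r := r) (a := a))
  exact ⟨max ‖z‖ (C + 1), le_max_left _ _, fun w hw =>
    (hC w hw).trans_lt ((lt_add_one C).trans_le (le_max_right _ _))⟩

theorem EncirclesOrigin.volume_real_eq (h : EncirclesOrigin d r a) {A ρ : ℝ}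
    (harea : encArea (polyParam d r a) = (A : ℂ))
    (hρ : ∀ w ∈ sphere (0 : ℂ) 1, ‖polyParam d r a w‖ < ρ) :
    volume.real (ball 0 ρ ∩ enclosedDomain d r a) = A := by
  rw [← ofReal_inj, ← h.circleAverage_conj_mul_deriv hρ, ← harea, encArea_polyParam]

theorem EncirclesOrigin.norm_schwarzRemainder_le_of_one_lt (h : EncirclesOrigin d r a)
    (hlim : Tendsto (schwarzRemainder d r a P) (Bornology.cobounded ℂ) (𝓝 0)) {ε : ℝ}
    (hε : 0 < ε) (harea : encArea (polyParam d r a) = ((π * ε ^ 2 : ℝ) : ℂ)) {w : ℂ}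
    (hw : 1 < ‖w‖) : ‖schwarzRemainder d r a P w‖ ≤ 3 * ε := by
  obtain ⟨ρ, hz, hρ⟩ := exists_norm_polyParam_lt_of_sphere (d := d) (r := r) (a := a)
    (polyParam d r a w)
  have hD : MeasurableSet (ball 0 ρ ∩ enclosedDomain d r a) :=
    measurableSet_ball.inter (isOpen_enclosedDomain h.pos).measurableSet
  have hDfin : volume (ball 0 ρ ∩ enclosedDomain d r a) ≠ ⊤ :=
    measure_ne_top_of_subset inter_subset_left measure_ball_lt_top.ne
  refine le_of_mul_le_mul_left ?_ pi_pos
  calc π * ‖schwarzRemainder d r a P w‖ = ‖π * schwarzRemainder d r a P w‖ := by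
        rw [norm_mul, norm_real, Real.norm_of_nonneg pi_nonneg]
    _ ≤ ∫ ζ in ball 0 ρ ∩ enclosedDomain d r a, ‖(polyParam d r a w - ζ)⁻¹‖ := by
        rw [h.schwarzRemainder_eq_integral hlim hρ hw]
        exact norm_integral_le_integral_norm _
    _ ≤ 2 * π * ε + volume.real (ball 0 ρ ∩ enclosedDomain d r a) / ε :=
        setIntegral_norm_inv_sub_le hD hDfin
          ((integrableOn_inv_sub_ball_zero hz).mono_set inter_subset_left) hε
    _ = π * (3 * ε) := by
        rw [h.volume_real_eq harea hρ]
        field_simp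
        ring

theorem EncirclesOrigin.norm_conj_sub_eval_le (h : EncirclesOrigin d r a)
    (hlim : Tendsto (schwarzRemainder d r a P) (Bornology.cobounded ℂ) (𝓝 0)) {ε : ℝ}
    (hε : 0 < ε) (harea : encArea (polyParam d r a) = ((π * ε ^ 2 : ℝ) : ℂ)) {w : ℂ}
    (hw : w ∈ sphere (0 : ℂ) 1) :
    ‖(starRingEnd ℂ) (polyParam d r a w) - P.eval (polyParam d r a w)‖ ≤ 3 * ε := by
  have hw1 : ‖w‖ = 1 := mem_sphere_zero_iff_norm.1 hw
  have hcont : Tendsto (fun t : ℝ => schwarzRemainder d r a P (t * w)) (𝓝[>] 1)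
      (𝓝 (schwarzRemainder d r a P w)) := by
    have hray : Tendsto (fun t : ℝ => (t : ℂ) * w) (𝓝[>] 1) (𝓝 w) := by
      have : Continuous fun t : ℝ => (t : ℂ) * w := by fun_prop
      simpa using (this.tendsto 1).mono_left nhdsWithin_le_nhds
    exact (differentiableAt_schwarzRemainder
      (ne_zero_of_one_le_norm hw1.ge)).continuousAt.tendsto.comp hray
  rw [← polyReflection_eq_conj hw]
  refine le_of_tendsto hcont.norm ?_
  filter_upwards [self_mem_nhdsWithin] with t ht
  refine h.norm_schwarzRemainder_le_of_one_lt hlim hε harea ?_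
  rw [norm_mul, hw1, mul_one, norm_real]
  exact (show (1 : ℝ) < t from ht).trans_le (le_abs_self t)

theorem EncirclesOrigin.le_of_forall_le_norm (h : EncirclesOrigin d r a) {ε ε₀ : ℝ}
    (hε : 0 ≤ ε) (harea : encArea (polyParam d r a) = ((π * ε ^ 2 : ℝ) : ℂ)) (hε₀ : 0 < ε₀)
    (hle : ∀ w ∈ sphere (0 : ℂ) 1, ε₀ ≤ ‖polyParam d r a w‖) : ε₀ ≤ ε := by
  obtain ⟨ρ, hε₀ρ, hρ⟩ := exists_norm_polyParam_lt_of_sphere (d := d) (r := r) (a := a) (ε₀ : ℂ)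
  rw [norm_real, Real.norm_of_nonneg hε₀.le] at hε₀ρ
  have hsub : ball 0 ε₀ ⊆ ball 0 ρ ∩ enclosedDomain d r a :=
    subset_inter (ball_subset_ball hε₀ρ) (h.ball_subset_enclosedDomain hε₀ hle)
  have hvol := measureReal_mono (μ := volume) hsub
    (measure_ne_top_of_subset inter_subset_left measure_ball_lt_top.ne)
  have hball : volume.real (ball (0 : ℂ) ε₀) = π * ε₀ ^ 2 := by
    rw [measureReal_def, Complex.volume_ball, ENNReal.toReal_mul, ENNReal.toReal_pow,
      ENNReal.toReal_ofReal hε₀.le, mul_comm]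
    rfl
  rw [h.volume_real_eq harea hρ, hball] at hvol
  exact le_of_sq_le_sq (le_of_mul_le_mul_left hvol pi_pos) hε

/-! ### Confinement of the solutions -/

theorem exists_norm_eval_sub_sub_le (Q : Polynomial ℂ) :
    ∃ C, 0 ≤ C ∧ ∀ ρ ≤ 1, ∀ u ∈ closedBall (0 : ℂ) ρ, ∀ v ∈ closedBall (0 : ℂ) ρ,
      ‖Q.eval u - Q.eval v - Q.coeff 1 * (u - v)‖ ≤ C * ρ * ‖u - v‖ := by
  obtain ⟨S, hS⟩ := Polynomial.X_sub_C_dvd_sub_C_eval (p := Q.derivative) (a := 0)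
  obtain ⟨C, hC⟩ := (isCompact_closedBall (0 : ℂ) 1).exists_bound_of_continuousOn
    S.continuous.continuousOn
  refine ⟨C, (norm_nonneg _).trans (hC 0 (mem_closedBall_self zero_le_one)),
    fun ρ hρ u hu v hv => ?_⟩
  have hderiv : ∀ z ∈ closedBall (0 : ℂ) ρ, HasDerivWithinAt
      (fun z => Q.eval z - Q.coeff 1 * z) (z * S.eval z) (closedBall 0 ρ) z := fun z _ => by
    have hfactor := congrArg (Polynomial.eval z) hS
    rw [← Polynomial.coeff_zero_eq_eval_zero, Polynomial.coeff_derivative] at hfactor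
    simp only [Polynomial.eval_sub, Polynomial.eval_mul, Polynomial.eval_X, Polynomial.eval_C,
      Nat.cast_zero, zero_add, mul_one, sub_zero] at hfactor
    rw [← hfactor]
    have hlinear : HasDerivAt (fun z => Q.coeff 1 * z) (Q.coeff 1) z := by
      simpa using (hasDerivAt_id z).const_mul (Q.coeff 1)
    exact ((Q.hasDerivAt z).fun_sub hlinear).hasDerivWithinAt
  have hbound : ∀ z ∈ closedBall (0 : ℂ) ρ, ‖z * S.eval z‖ ≤ C * ρ := fun z hz => by
    have hz1 := mem_closedBall_zero_iff.1 hz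
    rw [norm_mul, mul_comm]
    exact mul_le_mul (hC z (closedBall_subset_closedBall hρ hz)) hz1 (norm_nonneg _)
      ((norm_nonneg _).trans (hC z (closedBall_subset_closedBall hρ hz)))
  have hmean := (convex_closedBall (0 : ℂ) ρ).norm_image_sub_le_of_norm_hasDerivWithin_le hderiv
    hbound hv hu
  rwa [show Q.eval u - Q.coeff 1 * u - (Q.eval v - Q.coeff 1 * v) =
    Q.eval u - Q.eval v - Q.coeff 1 * (u - v) by ring] at hmean

/-- Radius, in units of `ε`, of the ball of coefficient vectors on which the fixed point argument
takes place when the linear coefficient of the Schwarz polynomial is `s`. -/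
noncomputable def coeffBound (d : ℕ) (s : ℂ) : ℝ :=
  6 * (d + 2) / (1 - ‖s‖)

/-- Bound, in units of `ε`, for the curves whose coefficient vectors lie in the ball of radius
`coeffBound d s`. -/
noncomputable def curveBound (d : ℕ) (s : ℂ) : ℝ :=
  1 + (d + 2) * coeffBound d s

/-- `P` is, at scale `ε`, a small perturbation of the affine map `z ↦ P(0) + s z`: the error has
Lipschitz constant `C ρ` on the disc of radius `ρ ≤ 1`, and `ε` is small in terms of `C`. -/
structure NearlyAffine (d : ℕ) (P : Polynomial ℂ) (s : ℂ) (C ε : ℝ) : Prop where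
  norm_lt_one : ‖s‖ < 1
  const_nonneg : 0 ≤ C
  pos : 0 < ε
  norm_eval_sub_sub_le : ∀ ρ ≤ 1, ∀ u ∈ closedBall (0 : ℂ) ρ, ∀ v ∈ closedBall (0 : ℂ) ρ,
    ‖P.eval u - P.eval v - s * (u - v)‖ ≤ C * ρ * ‖u - v‖
  curveBound_mul_le : curveBound d s * ε ≤ 1
  const_mul_le : 16 * (d + 2) ^ 3 * (C * curveBound d s ^ 2 * ε) ≤ 1 - ‖s‖
  eval_zero_sq_lt : 2 * ‖P.eval 0‖ ^ 2 < ε ^ 2 * (1 - ‖s‖)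

theorem exists_eventually_nearlyAffine (d : ℕ) {Q : Polynomial ℂ} (hQ₀ : Q.coeff 0 = 0)
    (hQ₁ : ‖Q.coeff 1‖ < 1) :
    ∃ C, ∀ᶠ ε : ℝ in 𝓝[>] 0, ∀ t₁ : ℂ, 2 * ‖t₁‖ ^ 2 < ε ^ 2 * (1 - ‖Q.coeff 1‖) →
      NearlyAffine d (Polynomial.C t₁ + Q) (Q.coeff 1) C ε := by
  obtain ⟨C, hC, hQ⟩ := exists_norm_eval_sub_sub_le Q
  refine ⟨C, ?_⟩
  have hsmall : ∀ A δ : ℝ, 0 < δ → ∀ᶠ ε : ℝ in 𝓝[>] 0, A * ε ≤ δ := fun A δ hδ => by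
    have hlim : Tendsto (fun ε : ℝ => A * ε) (𝓝[>] 0) (𝓝 0) := by
      have : Continuous fun ε : ℝ => A * ε := by fun_prop
      simpa using (this.tendsto 0).mono_left nhdsWithin_le_nhds
    exact hlim.eventually_le_const hδ
  filter_upwards [self_mem_nhdsWithin, hsmall (curveBound d (Q.coeff 1)) 1 one_pos,
    hsmall (16 * (d + 2) ^ 3 * (C * curveBound d (Q.coeff 1) ^ 2)) (1 - ‖Q.coeff 1‖)
      (sub_pos.2 hQ₁)] with ε hε hcurve hconst t₁ ht₁
  refine ⟨hQ₁, hC, hε, fun ρ hρ u hu v hv => ?_, hcurve, by rwa [← mul_assoc], ?_⟩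
  · simpa using hQ ρ hρ u hu v hv
  · rwa [Polynomial.eval_add, Polynomial.eval_C, ← Polynomial.coeff_zero_eq_eval_zero, hQ₀,
      add_zero]

namespace NearlyAffine

variable {s : ℂ} {C ε : ℝ}

theorem one_sub_norm_pos (hP : NearlyAffine d P s C ε) : 0 < 1 - ‖s‖ :=
  sub_pos.2 hP.norm_lt_one

theorem coeffBound_pos (hP : NearlyAffine d P s C ε) : 0 < coeffBound d s :=
  div_pos (by positivity) hP.one_sub_norm_pos

theorem coeffBound_mul (hP : NearlyAffine d P s C ε) :
    coeffBound d s * (1 - ‖s‖) = 6 * (d + 2) :=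
  div_mul_cancel₀ _ hP.one_sub_norm_pos.ne'

theorem le_coeffBound_mul (hP : NearlyAffine d P s C ε) :
    12 ≤ coeffBound d s * (1 - ‖s‖) := by
  rw [hP.coeffBound_mul]
  linarith [(Nat.cast_nonneg d : (0 : ℝ) ≤ d)]

theorem one_lt_coeffBound (hP : NearlyAffine d P s C ε) : 1 < coeffBound d s := by
  nlinarith [hP.le_coeffBound_mul, hP.coeffBound_pos, norm_nonneg s]

theorem coeffBound_le_curveBound (hP : NearlyAffine d P s C ε) :
    1 + coeffBound d s ≤ curveBound d s := by
  rw [curveBound]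
  nlinarith [hP.coeffBound_pos, (Nat.cast_nonneg d : (0 : ℝ) ≤ d)]

theorem one_le_curveBound (hP : NearlyAffine d P s C ε) : 1 ≤ curveBound d s :=
  (le_add_of_nonneg_right hP.coeffBound_pos.le).trans hP.coeffBound_le_curveBound

theorem norm_eval_zero_le (hP : NearlyAffine d P s C ε) : ‖P.eval 0‖ ≤ ε := by
  refine le_of_sq_le_sq ?_ hP.pos.le
  nlinarith [hP.eval_zero_sq_lt, sq_nonneg ε, norm_nonneg s, sq_nonneg ‖P.eval 0‖]

theorem norm_eval_sub_le (hP : NearlyAffine d P s C ε) {z : ℂ} (hz : ‖z‖ ≤ 1) :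
    ‖P.eval z - P.eval 0 - s * z‖ ≤ C * ‖z‖ ^ 2 := by
  have := hP.norm_eval_sub_sub_le ‖z‖ hz z (mem_closedBall_zero_iff.2 le_rfl) 0
    (mem_closedBall_self (norm_nonneg z))
  rwa [sub_zero, mul_assoc, ← sq] at this

theorem norm_eval_le (hP : NearlyAffine d P s C ε) {z : ℂ} (hz : ‖z‖ ≤ 1) :
    ‖P.eval z‖ ≤ ε + ‖s‖ * ‖z‖ + C * ‖z‖ ^ 2 := by
  have htri := norm_add₃_le (a := P.eval z - P.eval 0 - s * z) (b := P.eval 0) (c := s * z)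
  rw [show P.eval z - P.eval 0 - s * z + P.eval 0 + s * z = P.eval z by ring, norm_mul] at htri
  linarith [hP.norm_eval_sub_le hz, hP.norm_eval_zero_le]

theorem mul_le_of_le (hP : NearlyAffine d P s C ε) {A : ℝ}
    (hA : A ≤ (d + 2) ^ 3 * curveBound d s ^ 2) : 16 * (A * (C * ε)) ≤ 1 - ‖s‖ := by
  have := mul_le_mul_of_nonneg_right hA (mul_nonneg hP.const_nonneg hP.pos.le)
  linarith [hP.const_mul_le]

theorem two_mul_norm_le (hP : NearlyAffine d P s C ε) {z : ℂ}
    (hz : ‖z‖ ≤ coeffBound d s * ε) (hzP : ‖(starRingEnd ℂ) z - P.eval z‖ ≤ 3 * ε) :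
    2 * ‖z‖ ≤ coeffBound d s * ε := by
  have hε := hP.pos
  have hC := hP.const_nonneg
  have hB := hP.one_le_curveBound
  have hz1 : ‖z‖ ≤ 1 := by nlinarith [hP.coeffBound_le_curveBound, hP.curveBound_mul_le]
  have hP' : ‖z‖ ≤ 3 * ε + (ε + ‖s‖ * ‖z‖ + C * ‖z‖ ^ 2) :=
    calc ‖z‖ = ‖((starRingEnd ℂ) z - P.eval z) + P.eval z‖ := by rw [sub_add_cancel, norm_conj]
      _ ≤ _ := norm_add_le_of_le hzP (hP.norm_eval_le hz1)
  have hcube : (1 : ℝ) ≤ (d + 2) ^ 3 := one_le_pow₀ (by linarith [d.cast_nonneg (α := ℝ)])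
  have hquad : 16 * (C * ‖z‖) ≤ 1 - ‖s‖ := by
    refine le_trans ?_ (hP.mul_le_of_le (A := coeffBound d s)
      (by nlinarith [hP.coeffBound_le_curveBound]))
    nlinarith
  nlinarith [mul_le_mul_of_nonneg_right hP.le_coeffBound_mul hε.le,
    hP.one_sub_norm_pos, norm_nonneg z, mul_le_mul_of_nonneg_right hquad (norm_nonneg z)]

end NearlyAffine

theorem forall_le_of_isPreconnected {X : Type*} [TopologicalSpace X] {S : Set X}
    (hS : IsPreconnected S) {f : X → ℝ} (hf : ContinuousOn f S) {b c : ℝ} (hbc : b < c)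
    (hgap : ∀ x ∈ S, f x ≤ c → f x ≤ b) {x₀ : X} (hx₀ : x₀ ∈ S) (hfx₀ : f x₀ ≤ c) {x : X}
    (hx : x ∈ S) : f x ≤ b := by
  by_contra! hbx
  have hcx : c < f x := not_le.1 fun hle => (hgap x hx hle).not_gt hbx
  obtain ⟨y, hy, hyc⟩ := hS.intermediate_value hx₀ hx hf ⟨hfx₀, hcx.le⟩
  exact (hgap y hy hyc.le).not_gt (hyc ▸ hbc)

theorem EncirclesOrigin.norm_polyParam_le (h : EncirclesOrigin d r a) {s : ℂ} {C ε : ℝ}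
    (hP : NearlyAffine d P s C ε)
    (hlim : Tendsto (schwarzRemainder d r a P) (Bornology.cobounded ℂ) (𝓝 0))
    (harea : encArea (polyParam d r a) = ((π * ε ^ 2 : ℝ) : ℂ)) {w : ℂ}
    (hw : w ∈ sphere (0 : ℂ) 1) : 2 * ‖polyParam d r a w‖ ≤ coeffBound d s * ε := by
  have hscale : ε < coeffBound d s * ε := lt_mul_of_one_lt_left hP.pos hP.one_lt_coeffBound
  have hcont : ContinuousOn (fun w => 2 * ‖polyParam d r a w‖) (sphere 0 1) :=
    continuousOn_const.mul continuousOn_polyParam_sphere.norm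
  obtain ⟨w₀, hw₀, hlt⟩ : ∃ w ∈ sphere (0 : ℂ) 1, ‖polyParam d r a w‖ < coeffBound d s * ε := by
    by_contra! hle
    exact hscale.not_ge (h.le_of_forall_le_norm hP.pos.le harea (hP.pos.trans hscale) hle)
  refine forall_le_of_isPreconnected isPreconnected_unitSphere hcont
    (c := 2 * (coeffBound d s * ε)) (by linarith [hP.pos]) (fun u hu hle => ?_) hw₀
    (by linarith) hw
  exact hP.two_mul_norm_le (by linarith) (h.norm_conj_sub_eval_le hlim hP.pos harea hu)

/-! ### Coefficient vectors -/

/-- The scaling `√(max 1 j)` of the `j`-th coefficient which turns the area formula into a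
Euclidean norm. -/
noncomputable def coeffWeight (j : ℕ) : ℝ :=
  √(max 1 j)

theorem one_le_coeffWeight (j : ℕ) : 1 ≤ coeffWeight j :=
  one_le_sqrt.2 (le_max_left _ _)

theorem coeffWeight_pos (j : ℕ) : 0 < coeffWeight j :=
  one_pos.trans_le (one_le_coeffWeight j)

theorem coeffWeight_ne_zero (j : ℕ) : (coeffWeight j : ℂ) ≠ 0 :=
  ofReal_ne_zero.2 (coeffWeight_pos j).ne'

theorem coeffWeight_sq (j : ℕ) : coeffWeight j ^ 2 = max 1 (j : ℝ) :=
  sq_sqrt (zero_le_one.trans (le_max_left _ _))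

theorem coeffWeight_zero : coeffWeight 0 = 1 := by
  simp [coeffWeight]

/-- The vector of weighted coefficients of a polynomial curve. -/
noncomputable def encode (a : Fin (d + 1) → ℂ) : EuclideanSpace ℂ (Fin (d + 1)) :=
  WithLp.toLp 2 fun j => coeffWeight j * a j

/-- The coefficients `a` with weighted vector `x`. -/
noncomputable def decode (x : EuclideanSpace ℂ (Fin (d + 1))) : Fin (d + 1) → ℂ :=
  fun j => x j / coeffWeight j

theorem encode_apply (j : Fin (d + 1)) : encode a j = coeffWeight j * a j :=
  rfl

theorem decode_encode : decode (encode a) = a :=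
  funext fun j => mul_div_cancel_left₀ (a j) (coeffWeight_ne_zero j)

theorem encode_decode (x : EuclideanSpace ℂ (Fin (d + 1))) : encode (decode x) = x :=
  PiLp.ext fun j => mul_div_cancel₀ (x j) (coeffWeight_ne_zero j)

theorem encode_sub (a b : Fin (d + 1) → ℂ) : encode (a - b) = encode a - encode b :=
  PiLp.ext fun _ => mul_sub _ _ _

theorem decode_sub (x y : EuclideanSpace ℂ (Fin (d + 1))) :
    decode (x - y) = decode x - decode y :=
  funext fun _ => sub_div _ _ _

theorem norm_encode_sq : ‖encode a‖ ^ 2 = ∑ j : Fin (d + 1), max 1 ((j : ℕ) : ℝ) * ‖a j‖ ^ 2 := by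
  rw [EuclideanSpace.norm_sq_eq]
  refine Finset.sum_congr rfl fun j _ => ?_
  rw [encode_apply, norm_mul, norm_real, Real.norm_of_nonneg (coeffWeight_pos _).le, mul_pow,
    coeffWeight_sq]

theorem norm_encode_sq_eq_add :
    ‖encode a‖ ^ 2 = ‖a 0‖ ^ 2 + ∑ j : Fin (d + 1), (j : ℕ) * ‖a j‖ ^ 2 := by
  rw [norm_encode_sq, Fin.sum_univ_succ, Fin.sum_univ_succ (fun j => ((j : ℕ) : ℝ) * ‖a j‖ ^ 2)]
  simp

theorem norm_decode_le (x : EuclideanSpace ℂ (Fin (d + 1))) (j : Fin (d + 1)) :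
    ‖decode x j‖ ≤ ‖x‖ := by
  rw [decode, norm_div, norm_real, Real.norm_of_nonneg (coeffWeight_pos _).le]
  exact (div_le_self (norm_nonneg _) (one_le_coeffWeight _)).trans (PiLp.norm_apply_le x j)

/-- The conformal radius for which the curve with weighted coefficients `x` encloses area
`π ε ^ 2`. -/
noncomputable def radius (ε : ℝ) (x : EuclideanSpace ℂ (Fin (d + 1))) : ℝ :=
  ‖(WithLp.toLp 2 (Function.update x 0 (ε : ℂ)) : EuclideanSpace ℂ (Fin (d + 1)))‖

theorem radius_encode_sq (ε : ℝ) (a : Fin (d + 1) → ℂ) :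
    radius ε (encode a) ^ 2 = ε ^ 2 + ∑ j : Fin (d + 1), (j : ℕ) * ‖a j‖ ^ 2 := by
  have hsum := norm_encode_sq_eq_add (a := a)
  rw [EuclideanSpace.norm_sq_eq, Fin.sum_univ_succ, encode_apply, Fin.val_zero, coeffWeight_zero,
    ofReal_one, one_mul] at hsum
  rw [radius, EuclideanSpace.norm_sq_eq, Fin.sum_univ_succ]
  simp only [Function.update_self, Function.update_of_ne (Fin.succ_ne_zero _), norm_real,
    Real.norm_eq_abs, sq_abs]
  linarith

theorem radius_sub_sq_add_le (ε : ℝ) (x y : EuclideanSpace ℂ (Fin (d + 1))) :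
    (radius ε x - radius ε y) ^ 2 + ‖x 0 - y 0‖ ^ 2 ≤ ‖x - y‖ ^ 2 := by
  have hrev : |radius ε x - radius ε y| ≤
      ‖(WithLp.toLp 2 (Function.update (x - y) 0 0) : EuclideanSpace ℂ (Fin (d + 1)))‖ := by
    refine (abs_norm_sub_norm_le _ _).trans_eq (congrArg _ (PiLp.ext fun j => ?_))
    by_cases hj : j = 0 <;> simp [hj]
  have hsplit : ‖x - y‖ ^ 2 = ‖x 0 - y 0‖ ^ 2 +
      ‖(WithLp.toLp 2 (Function.update (x - y) 0 0) : EuclideanSpace ℂ (Fin (d + 1)))‖ ^ 2 := by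
    simp [EuclideanSpace.norm_sq_eq, Fin.sum_univ_succ]
  have := sq_le_sq.2 (hrev.trans (le_abs_self _))
  linarith

theorem abs_radius_sub_le (ε : ℝ) (x y : EuclideanSpace ℂ (Fin (d + 1))) :
    |radius ε x - radius ε y| ≤ ‖x - y‖ :=
  abs_le_of_sq_le_sq (by linarith [radius_sub_sq_add_le ε x y, sq_nonneg ‖x 0 - y 0‖])
    (norm_nonneg _)

theorem radius_encode_eq_iff {ε : ℝ} (hr : 0 ≤ r) : radius ε (encode a) = r ↔
    r ^ 2 = ε ^ 2 + ∑ j : Fin (d + 1), (j : ℕ) * ‖a j‖ ^ 2 := by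
  rw [← radius_encode_sq, eq_comm]
  exact (sq_eq_sq₀ hr (norm_nonneg _)).symm

theorem radius_zero {ε : ℝ} (hε : 0 ≤ ε) :
    radius ε (0 : EuclideanSpace ℂ (Fin (d + 1))) = ε := by
  have hzero : encode (0 : Fin (d + 1) → ℂ) = 0 := PiLp.ext fun _ => mul_zero _
  rw [← hzero, radius_encode_eq_iff hε]
  simp

/-- The weighted vector of the conjugated Laurent coefficients of `f` on the unit circle. -/
noncomputable def coeffVector (d : ℕ) (f : ℂ → ℂ) : EuclideanSpace ℂ (Fin (d + 1)) :=
  encode fun j => (starRingEnd ℂ) (laurentCoeff j f)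

theorem coeffVector_sub {f g : ℂ → ℂ} (hf : ContinuousOn f (sphere 0 1))
    (hg : ContinuousOn g (sphere 0 1)) :
    coeffVector d (fun w => f w - g w) = coeffVector d f - coeffVector d g := by
  rw [coeffVector, coeffVector, coeffVector, ← encode_sub]
  congr 1
  funext j
  rw [laurentCoeff_sub hf hg, map_sub, Pi.sub_apply]

theorem norm_coeffVector_le {f : ℂ → ℂ} {K : ℝ} (hf : ∀ w ∈ sphere (0 : ℂ) 1, ‖f w‖ ≤ K) :
    ‖coeffVector d f‖ ≤ (d + 1) * K := by
  have hK : 0 ≤ K := (norm_nonneg _).trans (hf 1 (by simp))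
  refine le_of_sq_le_sq ?_ (by positivity)
  calc ‖coeffVector d f‖ ^ 2 ≤ ∑ _j : Fin (d + 1), ((d : ℝ) + 1) * K ^ 2 := by
        rw [coeffVector, norm_encode_sq]
        refine Finset.sum_le_sum fun j _ => ?_
        have hj : ((j : ℕ) : ℝ) ≤ d := by exact_mod_cast Nat.lt_succ_iff.1 j.is_lt
        rw [norm_conj]
        exact mul_le_mul (max_le (by simp) (by linarith))
          (pow_le_pow_left₀ (norm_nonneg _) (norm_laurentCoeff_le hf _) 2) (by positivity)
          (by positivity)
    _ = ((d + 1) * K) ^ 2 := by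
        rw [Finset.sum_const, Finset.card_univ, Fintype.card_fin, nsmul_eq_mul]
        push_cast
        ring

theorem sum_ite_val_eq_le {n : ℕ} (m : ℕ) {c : ℝ} (hc : 0 ≤ c) :
    ∑ i : Fin n, (if (i : ℕ) = m then c else 0) ≤ c := by
  rw [Fin.sum_univ_eq_sum_range fun i => if i = m then c else 0, Finset.sum_ite_eq']
  split_ifs <;> simp [hc]

theorem norm_coeffVector_mul_polyParam_sq_le (s : ℂ) :
    ‖coeffVector d (fun w => s * polyParam d r a w)‖ ^ 2 ≤ ‖s‖ ^ 2 * (r ^ 2 + ‖a 0‖ ^ 2) := by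
  have hcoeff : ∀ m, laurentCoeff m (fun w => s * polyParam d r a w) =
      s * ((if m = 1 then (r : ℂ) else 0) + if m = 0 then a 0 else 0) := fun m => by
    rw [laurentCoeff_const_mul, laurentCoeff_polyParam]
  have hterm : ∀ i : ℕ, max 1 ((i + 1 : ℕ) : ℝ) * ‖s * ((if i + 1 = 1 then (r : ℂ) else 0) +
      if i + 1 = 0 then a 0 else 0)‖ ^ 2 = ‖s‖ ^ 2 * if i = 0 then r ^ 2 else 0 := fun i => by
    by_cases hi : i = 0 <;> simp [hi, mul_pow]
  rw [coeffVector, norm_encode_sq, Fin.sum_univ_succ]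
  simp only [hcoeff, norm_conj, Fin.val_succ, hterm, ← Finset.mul_sum]
  rw [add_comm, mul_add (‖s‖ ^ 2)]
  refine add_le_add (mul_le_mul_of_nonneg_left (sum_ite_val_eq_le 0 (sq_nonneg r))
    (sq_nonneg _)) (le_of_eq ?_)
  simp [mul_pow]

theorem polyParam_params_sub {r' : ℝ} {a' : Fin (d + 1) → ℂ} (w : ℂ) :
    polyParam d r a w - polyParam d r' a' w = polyParam d (r - r') (a - a') w := by
  simp only [polyParam, ofReal_sub, Pi.sub_apply, sub_mul, Finset.sum_sub_distrib]
  ring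

theorem norm_polyParam_le_of_sphere {w : ℂ} (hw : w ∈ sphere (0 : ℂ) 1) :
    ‖polyParam d r a w‖ ≤ |r| + ∑ j, ‖a j‖ := by
  have hw1 := mem_sphere_zero_iff_norm.1 hw
  refine norm_add_le_of_le (by simp [hw1]) (norm_sum_le_of_le _ fun j _ => ?_)
  simp [hw1]

/-! ### The fixed point problem -/

theorem existsUnique_fixedPoint_of_dist_le {X : Type*} [MetricSpace X] {S : Set X}
    (hS : IsComplete S) (hne : S.Nonempty) {f : X → X} (hmaps : MapsTo f S S) {q : ℝ}
    (hq : q < 1) (hf : ∀ x ∈ S, ∀ y ∈ S, dist (f x) (f y) ≤ q * dist x y) :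
    ∃! x, x ∈ S ∧ f x = x := by
  have hcontr : ContractingWith q.toNNReal (hmaps.restrict f S S) :=
    ⟨Real.toNNReal_lt_one.2 hq, LipschitzWith.of_dist_le_mul fun x y =>
      (hf x x.2 y y.2).trans (mul_le_mul_of_nonneg_right (le_coe_toNNReal q) dist_nonneg)⟩
  obtain ⟨x₀, hx₀⟩ := hne
  obtain ⟨x, hx, hfix, -⟩ := hcontr.exists_fixedPoint' hS hmaps hx₀ (edist_ne_top _ _)
  refine ⟨x, ⟨hx, hfix⟩, fun y ⟨hy, hyfix⟩ => ?_⟩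
  have hdist := hf y hy x hx
  rw [hyfix, hfix.eq] at hdist
  exact dist_le_zero.1 (by nlinarith [dist_nonneg (x := y) (y := x)])

/-- The curve with weighted coefficient vector `x` enclosing area `π ε ^ 2`. -/
noncomputable def curve (ε : ℝ) (x : EuclideanSpace ℂ (Fin (d + 1))) : ℂ → ℂ :=
  polyParam d (radius ε x) (decode x)

/-- The map on weighted coefficient vectors whose fixed points are the curves of area `π ε ^ 2`
with Schwarz remainder vanishing at infinity. -/
noncomputable def momentMap (P : Polynomial ℂ) (ε : ℝ) (x : EuclideanSpace ℂ (Fin (d + 1))) :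
    EuclideanSpace ℂ (Fin (d + 1)) :=
  coeffVector d fun w => P.eval (curve ε x w)

theorem norm_curve_le {ε : ℝ} (hε : 0 ≤ ε) (x : EuclideanSpace ℂ (Fin (d + 1))) {w : ℂ}
    (hw : w ∈ sphere (0 : ℂ) 1) : ‖curve ε x w‖ ≤ ε + (d + 2) * ‖x‖ := by
  have hradius := abs_radius_sub_le ε x 0
  rw [radius_zero hε, sub_zero] at hradius
  have hsum : ∑ j, ‖decode x j‖ ≤ (d + 1) * ‖x‖ := by
    simpa using Finset.sum_le_card_nsmul Finset.univ _ _ fun j _ => norm_decode_le x j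
  have hsphere := norm_polyParam_le_of_sphere (r := radius ε x) (a := decode x) hw
  have habs := abs_sub_abs_le_abs_sub (radius ε x) ε
  rw [abs_of_nonneg hε] at habs
  exact hsphere.trans (by linarith)

theorem norm_curve_sub_le (ε : ℝ) (x y : EuclideanSpace ℂ (Fin (d + 1))) {w : ℂ}
    (hw : w ∈ sphere (0 : ℂ) 1) : ‖curve ε x w - curve ε y w‖ ≤ (d + 2) * ‖x - y‖ := by
  have hsum : ∑ j, ‖decode (x - y) j‖ ≤ (d + 1) * ‖x - y‖ := by
    simpa using Finset.sum_le_card_nsmul Finset.univ _ _ fun j _ => norm_decode_le (x - y) j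
  rw [curve, curve, polyParam_params_sub, ← decode_sub]
  linarith [norm_polyParam_le_of_sphere (r := radius ε x - radius ε y) (a := decode (x - y)) hw,
    abs_radius_sub_le ε x y]

theorem continuousOn_curve (ε : ℝ) (x : EuclideanSpace ℂ (Fin (d + 1))) :
    ContinuousOn (curve ε x) (sphere 0 1) :=
  continuousOn_polyParam_sphere

theorem norm_coeffVector_mul_curve_sub_le (s : ℂ) (ε : ℝ)
    (x y : EuclideanSpace ℂ (Fin (d + 1))) :
    ‖coeffVector d (fun w => s * (curve ε x w - curve ε y w))‖ ≤ ‖s‖ * ‖x - y‖ := by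
  have hdecode : decode (x - y) 0 = x 0 - y 0 := by simp [decode, coeffWeight_zero]
  refine le_of_sq_le_sq ?_ (by positivity)
  simp only [curve, polyParam_params_sub]
  rw [← decode_sub, mul_pow]
  refine (norm_coeffVector_mul_polyParam_sq_le s).trans ?_
  rw [hdecode]
  exact mul_le_mul_of_nonneg_left (radius_sub_sq_add_le ε x y) (sq_nonneg _)

namespace NearlyAffine

variable {s : ℂ} {C ε : ℝ}

theorem norm_curve_le (hP : NearlyAffine d P s C ε) {x : EuclideanSpace ℂ (Fin (d + 1))}
    (hx : x ∈ closedBall 0 (coeffBound d s * ε)) {w : ℂ} (hw : w ∈ sphere (0 : ℂ) 1) :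
    ‖curve ε x w‖ ≤ curveBound d s * ε := by
  have hx' := mem_closedBall_zero_iff.1 hx
  refine (PolynomialCurve.norm_curve_le hP.pos.le x hw).trans ?_
  rw [curveBound]
  nlinarith [(Nat.cast_nonneg d : (0 : ℝ) ≤ d)]

theorem dist_momentMap_le (hP : NearlyAffine d P s C ε) {x y : EuclideanSpace ℂ (Fin (d + 1))}
    (hx : x ∈ closedBall 0 (coeffBound d s * ε)) (hy : y ∈ closedBall 0 (coeffBound d s * ε)) :
    dist (momentMap P ε x) (momentMap P ε y) ≤ (1 + ‖s‖) / 2 * dist x y := by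
  set E : ℂ → ℂ := fun w =>
    P.eval (curve ε x w) - P.eval (curve ε y w) - s * (curve ε x w - curve ε y w) with hE
  have hPx : ∀ z : EuclideanSpace ℂ (Fin (d + 1)),
      ContinuousOn (fun w => P.eval (curve ε z w)) (sphere 0 1) := fun z =>
    P.continuous.comp_continuousOn (continuousOn_curve ε z)
  have hlinear : ContinuousOn (fun w => s * (curve ε x w - curve ε y w)) (sphere 0 1) :=
    continuousOn_const.mul ((continuousOn_curve ε x).sub (continuousOn_curve ε y))
  have hsplit : momentMap P ε x - momentMap P ε y =
      coeffVector d E + coeffVector d fun w => s * (curve ε x w - curve ε y w) := by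
    rw [hE, coeffVector_sub ((hPx x).fun_sub (hPx y)) hlinear, sub_add_cancel,
      coeffVector_sub (hPx x) (hPx y)]
    rfl
  have hC := hP.const_nonneg
  have hB := hP.one_le_curveBound
  have hbound : ∀ w ∈ sphere (0 : ℂ) 1,
      ‖E w‖ ≤ C * (curveBound d s * ε) * ((d + 2) * ‖x - y‖) := fun w hw =>
    (hP.norm_eval_sub_sub_le _ hP.curveBound_mul_le _
      (mem_closedBall_zero_iff.2 (hP.norm_curve_le hx hw)) _
      (mem_closedBall_zero_iff.2 (hP.norm_curve_le hy hw))).trans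
        (mul_le_mul_of_nonneg_left (norm_curve_sub_le ε x y hw)
          (mul_nonneg hC (by nlinarith [hP.pos])))
  have hd : (0 : ℝ) ≤ d := Nat.cast_nonneg d
  have hsmall := hP.mul_le_of_le (A := (d + 1) * (d + 2) * curveBound d s)
    (mul_le_mul (by nlinarith [pow_nonneg hd 3]) (le_self_pow₀ hB two_ne_zero) (by positivity)
      (by positivity))
  rw [dist_eq_norm, dist_eq_norm, hsplit]
  refine (norm_add_le_of_le (norm_coeffVector_le hbound)
    (norm_coeffVector_mul_curve_sub_le s ε x y)).trans ?_
  nlinarith [mul_le_mul_of_nonneg_right hsmall (norm_nonneg (x - y)), norm_nonneg (x - y),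
    mul_nonneg hP.one_sub_norm_pos.le (norm_nonneg (x - y))]

theorem norm_momentMap_zero_le (hP : NearlyAffine d P s C ε) :
    ‖momentMap P ε (0 : EuclideanSpace ℂ (Fin (d + 1)))‖ ≤ (d + 1) * (3 * ε) := by
  have hε := hP.pos
  have hε1 : ε ≤ 1 := by nlinarith [hP.one_le_curveBound, hP.curveBound_mul_le]
  have hcube : (1 : ℝ) ≤ (d + 2) ^ 3 := one_le_pow₀ (by linarith [d.cast_nonneg (α := ℝ)])
  have hCε := hP.mul_le_of_le (A := 1) (by nlinarith [hP.one_le_curveBound])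
  refine norm_coeffVector_le fun w hw => ?_
  have hcurve : ‖curve ε (0 : EuclideanSpace ℂ (Fin (d + 1))) w‖ ≤ ε := by
    simpa using PolynomialCurve.norm_curve_le hε.le (0 : EuclideanSpace ℂ (Fin (d + 1))) hw
  refine (hP.norm_eval_le (hcurve.trans hε1)).trans ?_
  have hsq := pow_le_pow_left₀ (norm_nonneg _) hcurve 2
  nlinarith [hP.const_nonneg, hP.norm_lt_one, norm_nonneg s,
    norm_nonneg (curve ε (0 : EuclideanSpace ℂ (Fin (d + 1))) w)]

theorem mapsTo_momentMap (hP : NearlyAffine d P s C ε) :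
    MapsTo (momentMap P ε) (closedBall (0 : EuclideanSpace ℂ (Fin (d + 1))) (coeffBound d s * ε))
      (closedBall 0 (coeffBound d s * ε)) := fun x hx => by
  have hx' := mem_closedBall_zero_iff.1 hx
  have hdist := hP.dist_momentMap_le hx (mem_closedBall_self (norm_nonneg x |>.trans hx'))
  rw [dist_eq_norm, dist_zero_right] at hdist
  rw [mem_closedBall_zero_iff]
  have htri := norm_sub_norm_le (momentMap P ε x) (momentMap P ε 0)
  have hzero := hP.norm_momentMap_zero_le
  have hM := congrArg (· * ε) hP.coeffBound_mul
  nlinarith [norm_nonneg s, hP.pos]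

theorem existsUnique_fixedPoint (hP : NearlyAffine d P s C ε) :
    ∃! x : EuclideanSpace ℂ (Fin (d + 1)),
      x ∈ closedBall 0 (coeffBound d s * ε) ∧ momentMap P ε x = x :=
  existsUnique_fixedPoint_of_dist_le isClosed_closedBall.isComplete
    (nonempty_closedBall.2 (mul_nonneg hP.coeffBound_pos.le hP.pos.le)) hP.mapsTo_momentMap
    (by linarith [hP.norm_lt_one]) fun _ hx _ hy => hP.dist_momentMap_le hx hy

end NearlyAffine

/-- The coefficient form of the moment problem: the area equation, and the vanishing of the
coefficients of nonnegative order of the Schwarz remainder. -/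
structure CoeffSystem (d : ℕ) (r : ℝ) (a : Fin (d + 1) → ℂ) (P : Polynomial ℂ) (ε : ℝ) :
    Prop where
  sq_eq : r ^ 2 = ε ^ 2 + ∑ j : Fin (d + 1), (j : ℕ) * ‖a j‖ ^ 2
  conj_eq : ∀ j : Fin (d + 1),
    (starRingEnd ℂ) (a j) = laurentCoeff j fun w => P.eval (polyParam d r a w)

theorem coeffSystem_iff (hP : P.natDegree ≤ d) {ε : ℝ} : CoeffSystem d r a P ε ↔
    encArea (polyParam d r a) = ((π * ε ^ 2 : ℝ) : ℂ) ∧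
      Tendsto (schwarzRemainder d r a P) (Bornology.cobounded ℂ) (𝓝 0) := by
  rw [encArea_polyParam_eq, ofReal_inj, mul_right_inj' pi_ne_zero, sub_eq_iff_eq_add,
    tendsto_schwarzRemainder_iff_laurentCoeff hP]
  exact ⟨fun h => ⟨h.sq_eq, h.conj_eq⟩, fun h => ⟨h.1, h.2⟩⟩

theorem coeffSystem_iff_momentMap {ε : ℝ} (hr : 0 ≤ r) : CoeffSystem d r a P ε ↔
    radius ε (encode a) = r ∧ momentMap P ε (encode a) = encode a := by
  have hmap (hrad : radius ε (encode a) = r) : momentMap P ε (encode a) =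
      encode fun j => (starRingEnd ℂ) (laurentCoeff j fun w => P.eval (polyParam d r a w)) := by
    rw [momentMap, curve, decode_encode, hrad, coeffVector]
  constructor
  · intro h
    have hrad := (radius_encode_eq_iff hr).2 h.sq_eq
    refine ⟨hrad, ?_⟩
    rw [hmap hrad]
    simp only [← h.conj_eq, conj_conj]
  · rintro ⟨hrad, hfix⟩
    refine ⟨(radius_encode_eq_iff hr).1 hrad, fun j => ?_⟩
    have hcoeff := congrArg decode ((hmap hrad).symm.trans hfix)
    rw [decode_encode, decode_encode] at hcoeff
    rw [← congrFun hcoeff j, conj_conj]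

/-! ### Geometry of the solution -/

theorem polyParamSlope_ne_zero_of_sum_lt (h : ∑ j : Fin (d + 1), (j : ℕ) * ‖a j‖ < r) {w u : ℂ}
    (hw : 1 ≤ ‖w‖) (hu : 1 ≤ ‖u‖) : polyParamSlope d r a w u ≠ 0 := fun h0 => by
  have hr : 0 ≤ r := (Finset.sum_nonneg fun j _ => by positivity).trans h.le
  exact (mul_norm_le_of_polyParamSlope_eq_zero hr hw hu h0).not_gt
    (h.trans_le (le_mul_of_one_le_right hr (one_le_mul_of_one_le_of_one_le hw hu)))

theorem injOn_exterior_of_sum_lt (h : ∑ j : Fin (d + 1), (j : ℕ) * ‖a j‖ < r) :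
    InjOn (polyParam d r a) {w | 1 ≤ ‖w‖} := fun w hw u hu heq => by
  rw [← sub_eq_zero, polyParam_sub (ne_zero_of_one_le_norm hw) (ne_zero_of_one_le_norm hu)] at heq
  exact sub_eq_zero.1 ((mul_eq_zero.1 heq).resolve_right (polyParamSlope_ne_zero_of_sum_lt h hw hu))

theorem deriv_polyParam_ne_zero_of_sum_lt (h : ∑ j : Fin (d + 1), (j : ℕ) * ‖a j‖ < r) {w : ℂ}
    (hw : 1 ≤ ‖w‖) : deriv (polyParam d r a) w ≠ 0 := by
  rw [← polyParamSlope_self (ne_zero_of_one_le_norm hw)]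
  exact polyParamSlope_ne_zero_of_sum_lt h hw hw

/-- The coefficients are those of the ellipse `w ↦ r * (w + conj s * w⁻¹) + a 0`, whose Schwarz
function has the polynomial part `t₁ + s * z`, up to an error `η`. -/
structure NearEllipse (d : ℕ) (r : ℝ) (a : Fin (d + 1) → ℂ) (t₁ s : ℂ) (η : ℝ) : Prop where
  norm_conj_zero_sub_le : ‖(starRingEnd ℂ) (a 0) - (t₁ + s * a 0)‖ ≤ η
  norm_sub_le : ∀ j : Fin (d + 1), j ≠ 0 →
    ‖a j - if (j : ℕ) = 1 then (starRingEnd ℂ) s * r else 0‖ ≤ η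

theorem CoeffSystem.nearEllipse {s : ℂ} {C ε : ℝ} (hsys : CoeffSystem d r a P ε)
    (hP : NearlyAffine d P s C ε)
    (hcurve : ∀ w ∈ sphere (0 : ℂ) 1, ‖polyParam d r a w‖ ≤ curveBound d s * ε) :
    NearEllipse d r a (P.eval 0) s (C * (curveBound d s * ε) ^ 2) := by
  have hcont : ContinuousOn (fun w => P.eval (polyParam d r a w)) (sphere 0 1) :=
    continuousOn_eval_polyParam_sphere
  have hcoeff : ∀ j : Fin (d + 1), ‖(starRingEnd ℂ) (a j) - (if (j : ℕ) = 0 then P.eval 0 else 0) -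
      s * ((if (j : ℕ) = 1 then (r : ℂ) else 0) + if (j : ℕ) = 0 then a 0 else 0)‖ ≤
        C * (curveBound d s * ε) ^ 2 := fun j => by
    rw [hsys.conj_eq, ← laurentCoeff_const, ← laurentCoeff_polyParam, ← laurentCoeff_const_mul,
      ← laurentCoeff_sub hcont continuousOn_const,
      ← laurentCoeff_sub (hcont.fun_sub continuousOn_const)
        (continuousOn_const.fun_mul continuousOn_polyParam_sphere)]
    refine norm_laurentCoeff_le (fun w hw => ?_) j
    refine (hP.norm_eval_sub_le ((hcurve w hw).trans hP.curveBound_mul_le)).trans ?_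
    exact mul_le_mul_of_nonneg_left (pow_le_pow_left₀ (norm_nonneg _) (hcurve w hw) 2)
      hP.const_nonneg
  refine ⟨by simpa [sub_sub] using hcoeff 0, fun j hj => ?_⟩
  have hj0 : (j : ℕ) ≠ 0 := fun h => hj (Fin.ext h)
  rw [← norm_conj, map_sub]
  simpa [hj0, apply_ite (starRingEnd ℂ)] using hcoeff j

-- With `ρ = ‖w‖`, the right side is at least `(1 - ‖s‖) * (ρ + ‖s‖ / ρ)`.
theorem one_sub_sq_le_norm_conj_sub {s w : ℂ} (hs : ‖s‖ ≤ 1) (hw : 1 ≤ ‖w‖) :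
    1 - ‖s‖ ^ 2 ≤ ‖(starRingEnd ℂ) (w + (starRingEnd ℂ) s * w⁻¹) -
      s * (w + (starRingEnd ℂ) s * w⁻¹)‖ := by
  have hw0 := ne_zero_of_one_le_norm hw
  have hρ : 0 < ‖w‖ := one_pos.trans_le hw
  have hconj : (starRingEnd ℂ) w = (‖w‖ ^ 2 : ℝ) * w⁻¹ := by
    rw [eq_mul_inv_iff_mul_eq₀ hw0, conj_mul', ofReal_pow]
  have hsplit : (starRingEnd ℂ) (w + (starRingEnd ℂ) s * w⁻¹) - s * (w + (starRingEnd ℂ) s * w⁻¹) =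
      ((‖w‖ ^ 2 - ‖s‖ ^ 2 : ℝ) : ℂ) * w⁻¹ - s * (((1 - (‖w‖ ^ 2)⁻¹ : ℝ) : ℂ) * w) := by
    have hnorm : s * (starRingEnd ℂ) s = (‖s‖ ^ 2 : ℝ) := by rw [mul_conj', ofReal_pow]
    have hinv : (starRingEnd ℂ) w⁻¹ = ((‖w‖ ^ 2)⁻¹ : ℝ) * w := by
      rw [map_inv₀, hconj, mul_inv, inv_inv, ofReal_inv]
    simp only [map_add, map_mul, conj_conj, hconj, hinv, ofReal_sub, ofReal_one, ← hnorm]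
    ring
  have hsq : 1 ≤ ‖w‖ ^ 2 := one_le_pow₀ hw
  have hsw : ‖s‖ ≤ ‖w‖ := hs.trans hw
  rw [hsplit]
  refine le_trans ?_ (norm_sub_norm_le _ _)
  simp only [norm_mul, norm_real, norm_inv]
  rw [Real.norm_of_nonneg (sub_nonneg.2 (pow_le_pow_left₀ (norm_nonneg s) hsw 2)),
    Real.norm_of_nonneg (sub_nonneg.2 (inv_le_one_of_one_le₀ hsq))]
  have hgap : 0 ≤ (1 - ‖s‖) * ((‖w‖ - 1) * (‖w‖ - ‖s‖)) / ‖w‖ :=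
    div_nonneg (mul_nonneg (sub_nonneg.2 hs)
      (mul_nonneg (sub_nonneg.2 hw) (sub_nonneg.2 hsw))) hρ.le
  have heq : (‖w‖ ^ 2 - ‖s‖ ^ 2) * ‖w‖⁻¹ - ‖s‖ * ((1 - (‖w‖ ^ 2)⁻¹) * ‖w‖) =
      1 - ‖s‖ ^ 2 + (1 - ‖s‖) * ((‖w‖ - 1) * (‖w‖ - ‖s‖)) / ‖w‖ := by
    field_simp
    ring
  linarith

namespace NearEllipse

variable {t₁ s : ℂ} {η : ℝ}

theorem sum_mul_norm_le (h : NearEllipse d r a t₁ s η) (hr : 0 ≤ r) :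
    ∑ j : Fin (d + 1), (j : ℕ) * ‖a j‖ ≤ ‖s‖ * r + (d + 1) * (d * η) := by
  have hη : 0 ≤ η := (norm_nonneg _).trans h.norm_conj_zero_sub_le
  have hterm : ∀ j : Fin (d + 1),
      (j : ℕ) * ‖a j‖ ≤ (if (j : ℕ) = 1 then ‖s‖ * r else 0) + d * η := fun j => by
    rcases eq_or_ne j 0 with rfl | hj
    · simpa using mul_nonneg d.cast_nonneg hη
    have hjd : ((j : ℕ) : ℝ) ≤ d := by exact_mod_cast j.is_le
    have herror := mul_le_mul hjd (h.norm_sub_le j hj) (norm_nonneg _) d.cast_nonneg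
    split_ifs at herror ⊢ with hj1
    · have htri := norm_le_norm_add_norm_sub' (a j) ((starRingEnd ℂ) s * r)
      rw [norm_mul, norm_conj, norm_real, Real.norm_of_nonneg hr] at htri
      rw [hj1, Nat.cast_one, one_mul] at herror ⊢
      exact htri.trans (add_le_add_right herror _)
    · simpa using herror
  calc ∑ j : Fin (d + 1), (j : ℕ) * ‖a j‖
      ≤ ∑ j : Fin (d + 1), ((if (j : ℕ) = 1 then ‖s‖ * r else 0) + d * η) :=
        Finset.sum_le_sum fun j _ => hterm j
    _ ≤ ‖s‖ * r + (d + 1) * (d * η) := by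
        rw [Finset.sum_add_distrib]
        simpa using sum_ite_val_eq_le (n := d + 1) 1 (mul_nonneg (norm_nonneg s) hr)

theorem norm_polyParam_sub_le (h : NearEllipse d r a t₁ s η) (hd : 0 < d) {w : ℂ}
    (hw : 1 ≤ ‖w‖) :
    ‖polyParam d r a w - (r * (w + (starRingEnd ℂ) s * w⁻¹) + a 0)‖ ≤ (d + 1) * η := by
  set b : Fin (d + 1) → ℂ := fun j =>
    if j = 0 then a 0 else if (j : ℕ) = 1 then (starRingEnd ℂ) s * r else 0
  have hellipse : r * (w + (starRingEnd ℂ) s * w⁻¹) + a 0 = polyParam d r b w := by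
    obtain ⟨d, rfl⟩ := Nat.exists_eq_add_of_lt hd
    rw [polyParam_apply, Fin.sum_univ_succ, Fin.sum_univ_succ]
    simp [b]
    ring
  have hsub : ∀ j, ‖a j - b j‖ ≤ η := fun j => by
    rcases eq_or_ne j 0 with rfl | hj
    · simpa [b] using (norm_nonneg _).trans h.norm_conj_zero_sub_le
    · simpa [b, hj] using h.norm_sub_le j hj
  have hinv : ‖w⁻¹‖ ≤ 1 := by
    rw [norm_inv]
    exact inv_le_one_of_one_le₀ hw
  rw [hellipse, polyParam_params_sub, sub_self, polyParam_apply, ofReal_zero, zero_mul, zero_add]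
  refine (norm_sum_le_of_le (n := fun _ => η) _ fun j _ => ?_).trans (by simp)
  rw [norm_mul, norm_pow]
  exact (mul_le_of_le_one_right (norm_nonneg _) (pow_le_one₀ (norm_nonneg _) hinv)).trans (hsub j)

theorem mul_one_sub_sq_le_of_eq_zero (h : NearEllipse d r a t₁ s η) (hd : 0 < d) (hr : 0 ≤ r)
    (hs : ‖s‖ ≤ 1) {w : ℂ} (hw : 1 ≤ ‖w‖) (h0 : polyParam d r a w = 0) :
    r * (1 - ‖s‖ ^ 2) ≤ ‖t₁‖ + (2 * d + 3) * η := by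
  set z := w + (starRingEnd ℂ) s * w⁻¹
  set v := r * z + a 0
  have hv : ‖v‖ ≤ (d + 1) * η := by
    simpa only [h0, zero_sub, norm_neg] using h.norm_polyParam_sub_le hd hw
  have hsplit : r * ((starRingEnd ℂ) z - s * z) =
      (starRingEnd ℂ) v - s * v - ((starRingEnd ℂ) (a 0) - (t₁ + s * a 0)) - t₁ := by
    simp only [v, map_add, map_mul, conj_ofReal]
    ring
  have hsv : ‖s * v‖ ≤ (d + 1) * η := by
    rw [norm_mul]
    exact (mul_le_of_le_one_left (norm_nonneg v) hs).trans hv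
  calc r * (1 - ‖s‖ ^ 2) ≤ ‖(r : ℂ) * ((starRingEnd ℂ) z - s * z)‖ := by
        rw [norm_mul, norm_real, Real.norm_of_nonneg hr]
        exact mul_le_mul_of_nonneg_left (one_sub_sq_le_norm_conj_sub hs hw) hr
    _ ≤ (d + 1) * η + (d + 1) * η + η + ‖t₁‖ := by
        rw [hsplit]
        exact norm_sub_le_of_le (norm_sub_le_of_le (norm_sub_le_of_le (by rwa [norm_conj]) hsv)
          h.norm_conj_zero_sub_le) le_rfl
    _ = _ := by ring

end NearEllipse

theorem CoeffSystem.sub_le_sq_mul {t₁ s : ℂ} {ε η : ℝ} (hsys : CoeffSystem d r a P ε)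
    (h : NearEllipse d r a t₁ s η) (hd : 0 < d) (hr : 0 ≤ r) (hs : ‖s‖ ≤ 1) :
    ε ^ 2 - 2 * (r * η) ≤ r ^ 2 * (1 - ‖s‖ ^ 2) := by
  let j₁ : Fin (d + 1) := ⟨1, Nat.lt_succ_of_le hd⟩
  have hη : 0 ≤ η := (norm_nonneg _).trans h.norm_conj_zero_sub_le
  have herror := h.norm_sub_le j₁ (by simp [j₁, Fin.ext_iff])
  rw [if_pos rfl, norm_sub_rev] at herror
  have hone : ‖s‖ * r - η ≤ ‖a j₁‖ := by
    have htri := norm_sub_norm_le ((starRingEnd ℂ) s * r) (a j₁)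
    rw [norm_mul, norm_conj, norm_real, Real.norm_of_nonneg hr] at htri
    linarith
  have hterm : ‖a j₁‖ ^ 2 ≤ ∑ j : Fin (d + 1), (j : ℕ) * ‖a j‖ ^ 2 := by
    have hle := Finset.single_le_sum (f := fun j : Fin (d + 1) => ((j : ℕ) : ℝ) * ‖a j‖ ^ 2)
      (fun j _ => by positivity) (Finset.mem_univ j₁)
    rwa [show ((j₁ : ℕ) : ℝ) = 1 from Nat.cast_one, one_mul] at hle
  have hsr := mul_nonneg (norm_nonneg s) hr
  nlinarith [hsys.sq_eq, sq_nonneg (‖a j₁‖ - ‖s‖ * r), mul_le_mul_of_nonneg_left hone hsr,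
    mul_le_mul_of_nonneg_right hs (mul_nonneg hr hη)]

theorem NearlyAffine.mul_sq_le {s : ℂ} {C ε : ℝ} (hP : NearlyAffine d P s C ε) :
    16 * ((d + 2) ^ 3 * (C * (curveBound d s * ε) ^ 2)) ≤ (1 - ‖s‖) * ε := by
  have := mul_le_mul_of_nonneg_right hP.const_mul_le hP.pos.le
  linarith

-- A zero would force `(ε ^ 2) * (1 - ‖s‖ ^ 2) ≤ (r * (1 - ‖s‖ ^ 2)) ^ 2 ≲ ‖P(0)‖ ^ 2`.
theorem CoeffSystem.polyParam_ne_zero {s : ℂ} {C ε : ℝ} (hsys : CoeffSystem d r a P ε)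
    (hP : NearlyAffine d P s C ε)
    (h : NearEllipse d r a (P.eval 0) s (C * (curveBound d s * ε) ^ 2)) (hd : 0 < d) (hr : 0 ≤ r)
    {w : ℂ} (hw : 1 ≤ ‖w‖) : polyParam d r a w ≠ 0 := fun h0 => by
  set η := C * (curveBound d s * ε) ^ 2
  have hs := hP.norm_lt_one.le
  have hη : 0 ≤ η := (norm_nonneg _).trans h.norm_conj_zero_sub_le
  have hN : 16 * ((2 * d + 3) * η) ≤ (1 - ‖s‖) * ε := by
    have hd0 : (0 : ℝ) ≤ d := d.cast_nonneg
    refine le_trans ?_ hP.mul_sq_le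
    gcongr
    nlinarith [pow_nonneg hd0 3, pow_nonneg hd0 2]
  have hηN : η ≤ (2 * d + 3) * η := le_mul_of_one_le_left hη (by linarith [d.cast_nonneg (α := ℝ)])
  have hupper := h.mul_one_sub_sq_le_of_eq_zero hd hr hs hw h0
  have hlower := hsys.sub_le_sq_mul h hd hr hs
  set N := (2 * d + 3) * η
  set p := 1 - ‖s‖ ^ 2
  have hκp : 1 - ‖s‖ ≤ p := by nlinarith [norm_nonneg s]
  have hκ := hP.one_sub_norm_pos
  have hp : 0 < p := hκ.trans_le hκp
  have hsq : ε ^ 2 * p ≤ (‖P.eval 0‖ + N) ^ 2 + 2 * ((‖P.eval 0‖ + N) * N) :=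
    calc ε ^ 2 * p ≤ (r * p) ^ 2 + 2 * (r * p * η) := by
          linarith [mul_le_mul_of_nonneg_right hlower hp.le]
      _ ≤ _ := by gcongr
  have hT := hP.norm_eval_zero_le
  have hε := hP.pos
  have hN1 : 16 * N ≤ ε := hN.trans (mul_le_of_le_one_left hε.le (by linarith [norm_nonneg s]))
  nlinarith [hP.eval_zero_sq_lt, mul_le_mul_of_nonneg_right hT (hη.trans hηN),
    mul_le_mul_of_nonneg_left hN hε.le, mul_le_mul_of_nonneg_left hκp (sq_nonneg ε),
    mul_le_mul_of_nonneg_right hN1 (hη.trans hηN)]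

theorem CoeffSystem.encirclesOrigin {s : ℂ} {C ε : ℝ} (hsys : CoeffSystem d r a P ε)
    (hP : NearlyAffine d P s C ε) (hd : 0 < d) (hr : 0 ≤ r)
    (hcurve : ∀ w ∈ sphere (0 : ℂ) 1, ‖polyParam d r a w‖ ≤ curveBound d s * ε) :
    EncirclesOrigin d r a := by
  have hellipse := hsys.nearEllipse hP hcurve
  have hεr : ε ≤ r := by
    refine le_of_sq_le_sq ?_ hr
    rw [hsys.sq_eq]
    exact le_add_of_nonneg_right (Finset.sum_nonneg fun j _ => by positivity)
  have hsum : ∑ j : Fin (d + 1), (j : ℕ) * ‖a j‖ < r := by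
    set η := C * (curveBound d s * ε) ^ 2
    have hη : 0 ≤ η := (norm_nonneg _).trans hellipse.norm_conj_zero_sub_le
    have hd0 : (0 : ℝ) ≤ d := d.cast_nonneg
    have hsmall : (d + 1) * (d * η) ≤ (d + 2) ^ 3 * η := by
      rw [← mul_assoc]
      gcongr
      nlinarith [pow_nonneg hd0 3]
    nlinarith [hellipse.sum_mul_norm_le hr, hP.mul_sq_le, hP.pos, hP.one_sub_norm_pos]
  have hinj := injOn_exterior_of_sum_lt hsum
  exact ⟨hP.pos.trans_le hεr, hinj.mono fun w hw => (mem_sphere_zero_iff_norm.1 hw).ge,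
    fun _ => deriv_polyParam_ne_zero_of_sum_lt hsum,
    fun _ => hsys.polyParam_ne_zero hP hellipse hd hr⟩

/-! ### Existence and uniqueness -/

theorem EncirclesOrigin.norm_encode_le (h : EncirclesOrigin d r a) {s : ℂ} {C ε : ℝ}
    (hP : NearlyAffine d P s C ε)
    (hlim : Tendsto (schwarzRemainder d r a P) (Bornology.cobounded ℂ) (𝓝 0))
    (harea : encArea (polyParam d r a) = ((π * ε ^ 2 : ℝ) : ℂ)) :
    ‖encode a‖ ≤ coeffBound d s * ε := by
  have hcurve : ∀ w ∈ sphere (0 : ℂ) 1, ‖polyParam d r a w‖ ≤ coeffBound d s * ε / 2 :=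
    fun w hw => by linarith [h.norm_polyParam_le hP hlim harea hw]
  have hr := norm_laurentCoeff_le hcurve 1
  have ha₀ := norm_laurentCoeff_le hcurve 0
  simp only [laurentCoeff_polyParam, ↓reduceIte, one_ne_zero, zero_ne_one, add_zero, zero_add,
    norm_real, Real.norm_of_nonneg h.pos.le] at hr ha₀
  rw [encArea_polyParam_eq, ofReal_inj, mul_right_inj' pi_ne_zero] at harea
  refine le_of_sq_le_sq ?_ (mul_pos hP.coeffBound_pos hP.pos).le
  rw [norm_encode_sq_eq_add]
  nlinarith [pow_le_pow_left₀ h.pos.le hr 2, pow_le_pow_left₀ (norm_nonneg _) ha₀ 2]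

theorem CoeffSystem.unique_of_norm_encode_le {s : ℂ} {C ε : ℝ} (hP : NearlyAffine d P s C ε)
    {r' : ℝ} {a' : Fin (d + 1) → ℂ} (h : CoeffSystem d r a P ε) (h' : CoeffSystem d r' a' P ε)
    (hr : 0 ≤ r) (hr' : 0 ≤ r') (ha : ‖encode a‖ ≤ coeffBound d s * ε)
    (ha' : ‖encode a'‖ ≤ coeffBound d s * ε) : r = r' ∧ a = a' := by
  obtain ⟨hrad, hfix⟩ := (coeffSystem_iff_momentMap hr).1 h
  obtain ⟨hrad', hfix'⟩ := (coeffSystem_iff_momentMap hr').1 h'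
  have heq : encode a = encode a' := hP.existsUnique_fixedPoint.unique
    ⟨mem_closedBall_zero_iff.2 ha, hfix⟩ ⟨mem_closedBall_zero_iff.2 ha', hfix'⟩
  exact ⟨by rw [← hrad, ← hrad', heq], by rw [← decode_encode (a := a), heq, decode_encode]⟩

theorem NearlyAffine.exists_coeffSystem {s : ℂ} {C ε : ℝ} (hP : NearlyAffine d P s C ε)
    (hd : 0 < d) : ∃ (r : ℝ) (a : Fin (d + 1) → ℂ), EncirclesOrigin d r a ∧
      CoeffSystem d r a P ε ∧ ‖encode a‖ ≤ coeffBound d s * ε := by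
  obtain ⟨x, ⟨hx, hfix⟩, -⟩ := hP.existsUnique_fixedPoint
  have hr : 0 ≤ radius ε x := norm_nonneg _
  have hsys : CoeffSystem d (radius ε x) (decode x) P ε := by
    rw [coeffSystem_iff_momentMap hr, encode_decode]
    exact ⟨rfl, hfix⟩
  refine ⟨radius ε x, decode x, hsys.encirclesOrigin hP hd hr fun w => hP.norm_curve_le hx, hsys,
    ?_⟩
  rwa [encode_decode, ← mem_closedBall_zero_iff]

theorem NearlyAffine.existsUnique {s : ℂ} {C ε : ℝ} (hP : NearlyAffine d P s C ε) (hd : 0 < d)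
    (hdeg : P.natDegree ≤ d) : ∃! ra : ℝ × (Fin (d + 1) → ℂ), EncirclesOrigin d ra.1 ra.2 ∧
      encArea (polyParam d ra.1 ra.2) = ((π * ε ^ 2 : ℝ) : ℂ) ∧
      Tendsto (schwarzRemainder d ra.1 ra.2 P) (Bornology.cobounded ℂ) (𝓝 0) := by
  obtain ⟨r, a, hencircles, hsys, hbound⟩ := hP.exists_coeffSystem hd
  refine ⟨(r, a), ⟨hencircles, (coeffSystem_iff hdeg).1 hsys⟩, ?_⟩
  rintro ⟨r', a'⟩ ⟨hencircles', harea, hlim⟩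
  obtain ⟨hr, ha⟩ := CoeffSystem.unique_of_norm_encode_le hP
    ((coeffSystem_iff hdeg).2 ⟨harea, hlim⟩) hsys hencircles'.pos.le hencircles.pos.le
    (hencircles'.norm_encode_le hP hlim harea) hbound
  exact Prod.ext hr ha

/-- The higher moments `t₂, …, t_{d+1}` gathered into the polynomial `∑ (k + 2) t_{k+2} z ^ (k+1)`,
the polynomial part without constant term of the Schwarz function. -/
noncomputable def momentPoly (d : ℕ) (t : ℕ → ℂ) : Polynomial ℂ :=
  ∑ k ∈ Finset.range d, Polynomial.monomial (k + 1) ((k + 2 : ℕ) * t (k + 2))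

theorem coeff_momentPoly_zero (t : ℕ → ℂ) : (momentPoly d t).coeff 0 = 0 := by
  simp [momentPoly, Polynomial.coeff_monomial]

theorem coeff_momentPoly_succ (t : ℕ → ℂ) (m : ℕ) : (momentPoly d t).coeff (m + 1) =
    if m < d then (m + 2 : ℕ) * t (m + 2) else 0 := by
  simp [momentPoly, Polynomial.coeff_monomial]

theorem natDegree_C_add_momentPoly_le (t₁ : ℂ) (t : ℕ → ℂ) :
    (Polynomial.C t₁ + momentPoly d t).natDegree ≤ d := by
  refine Polynomial.natDegree_le_iff_coeff_eq_zero.2 fun n hn => ?_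
  obtain ⟨m, rfl⟩ := Nat.exists_eq_succ_of_ne_zero (Nat.ne_zero_of_lt hn)
  rw [Polynomial.coeff_add, coeff_momentPoly_succ, if_neg (by omega), Polynomial.coeff_C_succ,
    add_zero]

theorem forall_moment_iff (d : ℕ) (t₁ : ℂ) (t M : ℕ → ℂ) :
    (∀ m : ℕ, (m + 1 : ℕ) * M (m + 1) = (Polynomial.C t₁ + momentPoly d t).coeff m) ↔
      M 1 = t₁ ∧ (∀ k, 2 ≤ k → k ≤ d + 1 → M k = t k) ∧ ∀ k, d + 1 < k → M k = 0 := by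
  have hsucc : ∀ m, ((m + 1 + 1 : ℕ) * M (m + 1 + 1) =
      (Polynomial.C t₁ + momentPoly d t).coeff (m + 1)) ↔
        M (m + 2) = if m < d then t (m + 2) else 0 := fun m => by
    rw [Polynomial.coeff_add, coeff_momentPoly_succ, Polynomial.coeff_C_succ, zero_add,
      ← mul_ite_zero]
    exact mul_right_inj' (Nat.cast_ne_zero.2 (m + 1).succ_ne_zero)
  rw [← Nat.and_forall_add_one]
  simp only [hsucc]
  refine and_congr (by simp [coeff_momentPoly_zero]) ⟨fun h => ⟨fun k hk hkd => ?_, fun k hk => ?_⟩,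
    fun ⟨h₁, h₂⟩ m => ?_⟩
  · obtain ⟨m, rfl⟩ := Nat.exists_eq_add_of_le' hk
    rw [h, if_pos (by omega)]
  · obtain ⟨m, rfl⟩ := Nat.exists_eq_add_of_le' (show 2 ≤ k by omega)
    rw [h, if_neg (by omega)]
  · split_ifs with hm
    · exact h₁ _ (by omega) (by omega)
    · exact h₂ _ (by omega)

theorem encirclesOrigin_and_tendsto_iff {t₁ : ℂ} {t : ℕ → ℂ} {A : ℂ} :
    (EncirclesOrigin d r a ∧ encArea (polyParam d r a) = A ∧
      Tendsto (schwarzRemainder d r a (Polynomial.C t₁ + momentPoly d t))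
        (Bornology.cobounded ℂ) (𝓝 0)) ↔
    0 < r ∧ InjOn (polyParam d r a) (sphere 0 1) ∧
      (∀ w : ℂ, 1 ≤ ‖w‖ → deriv (polyParam d r a) w ≠ 0) ∧
      (∀ w : ℂ, 1 ≤ ‖w‖ → polyParam d r a w ≠ 0) ∧ encArea (polyParam d r a) = A ∧
      extMoment (polyParam d r a) 1 = t₁ ∧
      (∀ k : ℕ, 2 ≤ k → k ≤ d + 1 → extMoment (polyParam d r a) k = t k) ∧
      ∀ k : ℕ, d + 1 < k → extMoment (polyParam d r a) k = 0 := by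
  rw [← forall_moment_iff]
  constructor
  · rintro ⟨h, harea, hlim⟩
    exact ⟨h.pos, h.injOn_sphere, h.deriv_ne_zero, h.ne_zero, harea,
      (tendsto_schwarzRemainder_iff_extMoment h.pos h.ne_zero
        (natDegree_C_add_momentPoly_le t₁ t)).1 hlim⟩
  · rintro ⟨hr, hinj, hderiv, hne, harea, hmoment⟩
    exact ⟨⟨hr, hinj, hderiv, hne⟩, harea, (tendsto_schwarzRemainder_iff_extMoment hr hne
      (natDegree_C_add_momentPoly_le t₁ t)).2 hmoment⟩

end PolynomialCurve

end

/-- Given `t₂,…,t_{d+1} ∈ ℂ` with `|t₂| < 1/2`, there exists `δ > 0` such that for all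
`t₀, t₁` with `0 < t₀ < δ` and `|t₁|² < t₀(1/2 − |t₂|)`, there is a unique positively
oriented polynomial curve of degree `≤ d` encircling the origin with enclosed area `π t₀`
and exterior harmonic moments `t₁,…,t_{d+1}` (and all higher moments zero).  Such a curve
is uniquely parametrized by its data `(r, a₀, …, a_d)` with `r > 0`. -/
theorem stmt_9 (d : ℕ) (hd : 0 < d) (t : ℕ → ℂ) (ht₂ : ‖t 2‖ < 1 / 2) :
    ∃ δ : ℝ, 0 < δ ∧ ∀ t₀ : ℝ, ∀ t₁ : ℂ,
      0 < t₀ → t₀ < δ → ‖t₁‖ ^ 2 < t₀ * (1 / 2 - ‖t 2‖) →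
      ∃! ra : ℝ × (Fin (d + 1) → ℂ),
        0 < ra.1 ∧
        Set.InjOn (polyParam d ra.1 ra.2) (Metric.sphere (0 : ℂ) 1) ∧
        (∀ w : ℂ, 1 ≤ ‖w‖ → deriv (polyParam d ra.1 ra.2) w ≠ 0) ∧
        (∀ w : ℂ, 1 ≤ ‖w‖ → polyParam d ra.1 ra.2 w ≠ 0) ∧
        encArea (polyParam d ra.1 ra.2) = ((Real.pi * t₀ : ℝ) : ℂ) ∧
        extMoment (polyParam d ra.1 ra.2) 1 = t₁ ∧
        (∀ k : ℕ, 2 ≤ k → k ≤ d + 1 → extMoment (polyParam d ra.1 ra.2) k = t k) ∧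
        (∀ k : ℕ, d + 1 < k → extMoment (polyParam d ra.1 ra.2) k = 0) := by
  have hcoeff : ‖(PolynomialCurve.momentPoly d t).coeff 1‖ = 2 * ‖t 2‖ := by
    simp [PolynomialCurve.coeff_momentPoly_succ, hd]
  obtain ⟨C, hC⟩ := PolynomialCurve.exists_eventually_nearlyAffine d
    (PolynomialCurve.coeff_momentPoly_zero t) (by linarith)
  obtain ⟨ε₀, hε₀, hsmall⟩ := mem_nhdsGT_iff_exists_Ioo_subset.1 hC
  refine ⟨ε₀ ^ 2, pow_pos hε₀ 2, fun t₀ t₁ ht₀ hδ ht₁ => ?_⟩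
  have hsqrt : √t₀ ^ 2 = t₀ := Real.sq_sqrt ht₀.le
  have hP := hsmall ⟨Real.sqrt_pos.2 ht₀, (Real.sqrt_lt' hε₀).2 hδ⟩ t₁
    (by rw [hcoeff, hsqrt]; linarith)
  have hunique := hP.existsUnique hd (PolynomialCurve.natDegree_C_add_momentPoly_le t₁ t)
  rw [hsqrt] at hunique
  simpa only [PolynomialCurve.encirclesOrigin_and_tendsto_iff] using hunique
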